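/- arXiv:math/0611488 — 2 statements merged into one kernel-verified Lean document; each statement's English description precedes it below -/
import Mathlib

section
/- Let a = (a_1,...,a_n) with 2 ≤ a_1 ≤ ... ≤ a_n satisfying a_j > Σ_{i=1}^{j−1}(a_i − 1) for all j > 1. Then every homogeneous ideal I ⊆ k[x_1,...,x_n] containing a homogeneous regular sequence f_1,...,f_n with deg(f_i) = a_i has the same Hilbert function as an ideal containing x_1^{a_1},...,x_n^{a_n}. -/
open MvPolynomial

/-- Hilbert function of a homogeneous ideal `I`: the `K`-dimension of its degree-`d` piece. -/
noncomputable def hilb {K : Type} [Field K] {n : ℕ}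
    (I : Ideal (MvPolynomial (Fin n) K)) (d : ℕ) : ℕ :=
  Module.finrank K ↥(Submodule.restrictScalars K I ⊓ homogeneousSubmodule (Fin n) K d)

/-- Hilbert function of the quotient `S/I` in degree `d`. -/
noncomputable def hilbQ {K : Type} [Field K] {n : ℕ}
    (I : Ideal (MvPolynomial (Fin n) K)) (d : ℕ) : ℕ :=
  Module.finrank K
    ((homogeneousSubmodule (Fin n) K d).map (Ideal.Quotient.mkₐ K I).toLinearMap)

/-- A homogeneous ideal: closed under taking homogeneous components. -/
def IsHomog {K : Type} [Field K] {n : ℕ} (I : Ideal (MvPolynomial (Fin n) K)) : Prop :=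
  ∀ f ∈ I, ∀ d : ℕ, homogeneousComponent d f ∈ I

/-- `f 0, ..., f (r-1)` is a regular sequence: it generates a proper ideal and each `f i`
is a nonzerodivisor modulo the ideal generated by the previous elements. -/
def IsRegSeq {K : Type} [Field K] {n r : ℕ} (f : Fin r → MvPolynomial (Fin n) K) : Prop :=
  Ideal.span (Set.range f) ≠ ⊤ ∧
  ∀ i : Fin r, ∀ g : MvPolynomial (Fin n) K,
    f i * g ∈ Ideal.span (f '' {j : Fin r | j < i}) →
      g ∈ Ideal.span (f '' {j : Fin r | j < i})

/-- A monomial ideal: generated by monomials. -/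
def IsMonomialIdeal {K : Type} [Field K] {n : ℕ} (I : Ideal (MvPolynomial (Fin n) K)) : Prop :=
  ∃ T : Set (Fin n →₀ ℕ), I = Ideal.span ((fun u => monomial u (1 : K)) '' T)

/-- `x^v` is lexicographically greater than `x^u` (for `x_0 > x_1 > ... > x_{n-1}`). -/
def lexGT {n : ℕ} (v u : Fin n →₀ ℕ) : Prop :=
  ∃ i : Fin n, u i < v i ∧ ∀ j : Fin n, j < i → v j = u j
/-- `EGHnr K n r h a`: every homogeneous ideal of `K[x_1,...,x_n]` containing a homogeneous
regular sequence of length `r` and degrees `a 0, ..., a (r-1)` has the same Hilbert function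
as some ideal containing the pure powers `x_i^{a i}` for `1 ≤ i ≤ r`. -/
def EGHnr (K : Type) [Field K] (n r : ℕ) (h : r ≤ n) (a : Fin r → ℕ) : Prop :=
  ∀ I : Ideal (MvPolynomial (Fin n) K), IsHomog I →
    (∃ f : Fin r → MvPolynomial (Fin n) K,
      IsRegSeq f ∧ (∀ i, (f i).IsHomogeneous (a i)) ∧ ∀ i, f i ∈ I) →
    ∃ J : Ideal (MvPolynomial (Fin n) K),
      (∀ i : Fin r, (X (Fin.castLE h i) : MvPolynomial (Fin n) K) ^ a i ∈ J) ∧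
      ∀ d : ℕ, hilb I d = hilb J d

/-!
Let `f_1, ..., f_r` be the regular sequence. The quotient `S / (f)` has the Hilbert function of the
box `∏ [0, a_i)`, so the lex segments of this box with the dimensions of `(I / (f))_d` as sizes span
an ideal containing the powers `x_i ^ a_i` with the Hilbert function of `I`, as soon as multiplying
the segment in degree `d` by the variables stays inside the segment in degree `d + 1`.

This growth bound for all `I ⊇ (f)` is proved by induction on `r`. A general linear form `l` is
regular modulo all the ideals `E_j = (f_1, ..., f_j)`, `j < r`, and the induction hypothesis applies
to `E_{r-1} + (l)`. In degrees below `a_r` the ideals `I` and `(f)` may be analysed without `f_r`: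
stacking the lex segments of the ideals `(I : l ^ j) + (l)` gives a set of exponents with the
Hilbert function of `I` that is closed under multiplication, and the Clements–Lindström theorem
yields the bound. The remaining degrees follow by linkage: `S / (f)` is Gorenstein with socle degree
`s = ∑ (a_i - 1)`, so the bound for `I` in degree `d` is equivalent to the bound for `(f) : I` in
degree `s - d - 1`, which is small because `s - a_r < a_r` by the growth condition.
-/

namespace EGH

section Box

variable {n : ℕ} {a : Fin n → ℕ} {d : ℕ}

/-- The exponent vectors of degree `d` in the box `∏ [0, a i)`. They index the monomials of degree
`d` outside the ideal `(x_1^{a_1}, ..., x_n^{a_n})`. -/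
def level (a : Fin n → ℕ) (d : ℕ) : Finset (Fin n → ℕ) :=
  {u ∈ Fintype.piFinset fun i => Finset.range (a i) | ∑ i, u i = d}

theorem mem_level {u : Fin n → ℕ} : u ∈ level a d ↔ (∀ i, u i < a i) ∧ ∑ i, u i = d := by
  simp [level]

/-- The upper shadow of a set of exponent vectors inside the box `∏ [0, a i)`: the exponents of the
multiples `x_i * x^u` with `u ∈ A`, as far as they stay in the box. -/
def upShadow (a : Fin n → ℕ) (A : Finset (Fin n → ℕ)) : Finset (Fin n → ℕ) :=
  {v ∈ Fintype.piFinset fun i => Finset.range (a i) | ∃ u ∈ A, ∃ i, v = u + Pi.single i 1}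

theorem mem_upShadow {A : Finset (Fin n → ℕ)} {v : Fin n → ℕ} :
    v ∈ upShadow a A ↔ (∀ i, v i < a i) ∧ ∃ u ∈ A, ∃ i, v = u + Pi.single i 1 := by
  simp [upShadow]

theorem sum_add_single (u : Fin n → ℕ) (i : Fin n) :
    ∑ j, (u + Pi.single i 1 : Fin n → ℕ) j = ∑ j, u j + 1 := by
  simp [Finset.sum_add_distrib]

theorem upShadow_mono {A B : Finset (Fin n → ℕ)} (h : A ⊆ B) : upShadow a A ⊆ upShadow a B := by
  intro v hv
  obtain ⟨hva, u, hu, i, rfl⟩ := mem_upShadow.1 hv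
  exact mem_upShadow.2 ⟨hva, u, h hu, i, rfl⟩

theorem upShadow_subset_level {A : Finset (Fin n → ℕ)} (hA : A ⊆ level a d) :
    upShadow a A ⊆ level a (d + 1) := by
  intro v hv
  obtain ⟨hva, u, hu, i, rfl⟩ := mem_upShadow.1 hv
  exact mem_level.2 ⟨hva, by rw [sum_add_single, (mem_level.1 (hA hu)).2]⟩

theorem add_single_mem_upShadow {A : Finset (Fin n → ℕ)} (hA : A ⊆ level a d) {u : Fin n → ℕ}
    (hu : u ∈ A) {i : Fin n} (hi : u i + 1 < a i) : u + Pi.single i 1 ∈ upShadow a A := by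
  refine mem_upShadow.2 ⟨fun k => ?_, u, hu, i, rfl⟩
  by_cases hk : k = i
  · subst hk
    simpa using hi
  · simpa [hk] using (mem_level.1 (hA hu)).1 k

theorem exists_add_single_eq {w : Fin n → ℕ} {k : Fin n} (hk : 0 < w k) :
    ∃ w' : Fin n → ℕ, w' + Pi.single k 1 = w := by
  refine ⟨w - Pi.single k 1, tsub_add_cancel_of_le fun j => ?_⟩
  by_cases hj : j = k
  · subst hj
    simpa [Nat.one_le_iff_ne_zero] using hk.ne'
  · simp [hj]

theorem mem_level_of_add_single {u : Fin n → ℕ} {i : Fin n}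
    (h : u + Pi.single i 1 ∈ level a (d + 1)) : u ∈ level a d := by
  rw [mem_level, sum_add_single] at h
  exact mem_level.2 ⟨fun j => (Nat.le_add_right _ _).trans_lt (h.1 j), by omega⟩

theorem exists_transfer {u : Fin n → ℕ} (hu : u ∈ level a d) {i j : Fin n} (hij : i ≠ j)
    (hi : u i + 1 < a i) (hj : 0 < u j) :
    ∃ w ∈ level a d, w + Pi.single j 1 = u + Pi.single i 1 := by
  obtain ⟨w, hw⟩ := exists_add_single_eq (w := u + Pi.single i 1) (k := j) (by simp [hij.symm, hj])
  refine ⟨w, mem_level_of_add_single (i := j) ?_, hw⟩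
  rw [hw]
  exact upShadow_subset_level subset_rfl (add_single_mem_upShadow subset_rfl hu hi)

end Box

section LexSegment

variable {n : ℕ} {a : Fin n → ℕ} {d : ℕ}

open scoped Classical in
/-- The number of elements of `level a d` that are lexicographically larger than `u`. -/
noncomputable def lexRank (a : Fin n → ℕ) (d : ℕ) (u : Fin n → ℕ) : ℕ :=
  {v ∈ level a d | toLex u < toLex v}.card

/-- The set of the `c` lexicographically largest elements of `level a d`; it is the whole level when
`c` exceeds the number of elements of the level. -/
noncomputable def lexSegment (a : Fin n → ℕ) (d c : ℕ) : Finset (Fin n → ℕ) :=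
  {u ∈ level a d | lexRank a d u < c}

/-- `L` is an initial segment of `level a d`, counted from the lexicographically largest element. -/
def IsLexSegment (a : Fin n → ℕ) (d : ℕ) (L : Finset (Fin n → ℕ)) : Prop :=
  L ⊆ level a d ∧ ∀ u ∈ L, ∀ v ∈ level a d, toLex u < toLex v → v ∈ L

theorem IsLexSegment.subset_of_card_le {L M : Finset (Fin n → ℕ)} (hL : IsLexSegment a d L)
    (hM : IsLexSegment a d M) (h : L.card ≤ M.card) : L ⊆ M := by
  by_contra hLM
  obtain ⟨u, huL, huM⟩ := Finset.not_subset.1 hLM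
  have hML : M ⊆ L := by
    intro v hv
    rcases lt_trichotomy (toLex u) (toLex v) with huv | huv | huv
    · exact hL.2 u huL v (hM.1 hv) huv
    · exact toLex.injective huv ▸ huL
    · exact absurd (hM.2 v hv u (hL.1 huL) huv) huM
  exact huM (Finset.eq_of_subset_of_card_le hML h ▸ huL)

theorem lexRank_lt_lexRank {u v : Fin n → ℕ} (hv : v ∈ level a d) (huv : toLex u < toLex v) :
    lexRank a d v < lexRank a d u := by
  classical
  refine Finset.card_lt_card
    ⟨Finset.monotone_filter_right _ fun w _ hw => huv.trans hw, fun h => ?_⟩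
  exact lt_irrefl _ (Finset.mem_filter.1 (h (Finset.mem_filter.2 ⟨hv, huv⟩))).2

theorem injOn_lexRank : Set.InjOn (lexRank a d) (level a d) := by
  intro u hu v hv huv
  rcases lt_trichotomy (toLex u) (toLex v) with h | h | h
  · exact absurd huv (lexRank_lt_lexRank hv h).ne'
  · exact toLex.injective h
  · exact absurd huv (lexRank_lt_lexRank hu h).ne

theorem image_lexRank : (level a d).image (lexRank a d) = Finset.range (level a d).card := by
  classical
  refine Finset.eq_of_subset_of_card_le (Finset.image_subset_iff.2 fun u hu => ?_) ?_
  · exact Finset.mem_range.2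
      (Finset.card_lt_card (Finset.filter_ssubset.2 ⟨u, hu, lt_irrefl (toLex u)⟩))
  · rw [Finset.card_range, Finset.card_image_of_injOn injOn_lexRank]

theorem isLexSegment_lexSegment (c : ℕ) : IsLexSegment a d (lexSegment a d c) :=
  ⟨Finset.filter_subset _ _, fun _ hu _ hv huv =>
    Finset.mem_filter.2 ⟨hv, (lexRank_lt_lexRank hv huv).trans (Finset.mem_filter.1 hu).2⟩⟩

theorem lexSegment_subset_level (c : ℕ) : lexSegment a d c ⊆ level a d :=
  (isLexSegment_lexSegment c).1

theorem lexSegment_mono {b c : ℕ} (h : b ≤ c) : lexSegment a d b ⊆ lexSegment a d c :=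
  Finset.monotone_filter_right _ fun _ _ hu => hu.trans_le h

theorem card_lexSegment {c : ℕ} (hc : c ≤ (level a d).card) : (lexSegment a d c).card = c := by
  have himage : (lexSegment a d c).image (lexRank a d) = Finset.range c := by
    rw [lexSegment, ← Finset.filter_image (p := (· < c)), image_lexRank]
    ext r
    simp only [Finset.mem_filter, Finset.mem_range]
    omega
  rw [← Finset.card_image_of_injOn
    (injOn_lexRank.mono (Finset.coe_subset.2 (lexSegment_subset_level c))), himage,
    Finset.card_range]

theorem IsLexSegment.eq_lexSegment {L : Finset (Fin n → ℕ)} (hL : IsLexSegment a d L) :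
    L = lexSegment a d L.card := by
  have hcard := card_lexSegment (Finset.card_le_card hL.1)
  exact (hL.subset_of_card_le (isLexSegment_lexSegment _) hcard.ge).antisymm
    ((isLexSegment_lexSegment _).subset_of_card_le hL hcard.le)

theorem exists_add_single_last_eq {w : Fin n → ℕ} (hw : w ≠ 0) :
    ∃ (w' : Fin n → ℕ) (k : Fin n), w' + Pi.single k 1 = w ∧ ∀ j, k < j → w' j = 0 := by
  obtain ⟨p, hp⟩ := Function.ne_iff.1 hw
  obtain ⟨k, hk, hkmax⟩ := Finset.exists_max_image {k | 0 < w k} id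
    ⟨p, by simpa using Nat.pos_of_ne_zero hp⟩
  simp only [Finset.mem_filter, Finset.mem_univ, true_and, id] at hk hkmax
  obtain ⟨w', rfl⟩ := exists_add_single_eq hk
  refine ⟨w', k, rfl, fun j hj => ?_⟩
  by_contra hj0
  exact absurd (hkmax j (by simp only [Pi.add_apply]; omega)) hj.not_ge

theorem toLex_le_of_add_single_lt {u w : Fin n → ℕ} {i k : Fin n} (hsum : ∑ j, u j = ∑ j, w j)
    (hk : ∀ j, k < j → w j = 0)
    (h : toLex (u + Pi.single i 1) < toLex (w + Pi.single k 1)) : toLex u ≤ toLex w := by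
  by_contra! hwu
  obtain ⟨p, hp, hpw⟩ := h
  obtain ⟨q, hq, hqu⟩ := hwu
  simp only [Pi.toLex_apply, Pi.add_apply] at hp hpw hq hqu
  by_cases hqk : q < k
  · have hk0 : ∀ j ≤ q, (Pi.single k 1 : Fin n → ℕ) j = 0 := fun j hj =>
      Pi.single_eq_of_ne (hj.trans_lt hqk).ne 1
    rcases lt_trichotomy p q with hpq | rfl | hpq
    · have := hk0 p hpq.le
      have := hq p hpq
      omega
    · have := hk0 p le_rfl
      omega
    · have := hk0 q le_rfl
      have := hp q hpq
      omega
  · have hle : ∀ j, w j ≤ u j := by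
      intro j
      rcases lt_trichotomy j q with hjq | rfl | hjq
      · exact (hq j hjq).le
      · exact hqu.le
      · exact (hk j ((not_lt.1 hqk).trans_lt hjq)).trans_le (Nat.zero_le _)
    exact hsum.not_gt (Finset.sum_lt_sum (fun j _ => hle j) ⟨q, Finset.mem_univ _, hqu⟩)

theorem IsLexSegment.upShadow {L : Finset (Fin n → ℕ)} (hL : IsLexSegment a d L) :
    IsLexSegment a (d + 1) (upShadow a L) := by
  refine ⟨upShadow_subset_level hL.1, fun v hv w hw hvw => ?_⟩
  obtain ⟨-, u, hu, i, rfl⟩ := mem_upShadow.1 hv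
  have hw0 : w ≠ 0 := by
    rintro rfl
    simpa using (mem_level.1 hw).2
  obtain ⟨w', k, rfl, hk⟩ := exists_add_single_last_eq hw0
  have hw' := mem_level_of_add_single hw
  have hsum : ∑ j, u j = ∑ j, w' j := by rw [(mem_level.1 (hL.1 hu)).2, (mem_level.1 hw').2]
  refine mem_upShadow.2 ⟨(mem_level.1 hw).1, w', ?_, k, rfl⟩
  rcases (toLex_le_of_add_single_lt hsum hk hvw).eq_or_lt with h | h
  · exact toLex.injective h ▸ hu
  · exact hL.2 u hu w' hw' h

end LexSegment

section Slice

variable {n : ℕ} {a : Fin (n + 1) → ℕ} {d : ℕ} {i : Fin (n + 1)} {j : ℕ}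
  {A : Finset (Fin (n + 1) → ℕ)} {w : Fin n → ℕ}

/-- The slice `u i = j` of a set of exponent vectors, with the `i`-th coordinate removed. -/
def slice (i : Fin (n + 1)) (j : ℕ) (A : Finset (Fin (n + 1) → ℕ)) : Finset (Fin n → ℕ) :=
  {u ∈ A | u i = j}.image i.removeNth

theorem mem_slice : w ∈ slice i j A ↔ (i.insertNth j w : Fin (n + 1) → ℕ) ∈ A := by
  simp only [slice, Finset.mem_image, Finset.mem_filter]
  constructor
  · rintro ⟨u, ⟨hu, rfl⟩, rfl⟩
    rwa [Fin.insertNth_self_removeNth]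
  · exact fun h => ⟨_, ⟨h, Fin.insertNth_apply_same ..⟩, Fin.removeNth_insertNth ..⟩

theorem removeNth_mem_slice {u : Fin (n + 1) → ℕ} : i.removeNth u ∈ slice i (u i) A ↔ u ∈ A := by
  rw [mem_slice, Fin.insertNth_self_removeNth]

theorem card_eq_sum_card_slice {m : ℕ} (h : ∀ u ∈ A, u i < m) :
    A.card = ∑ j ∈ Finset.range m, (slice i j A).card := by
  rw [Finset.card_eq_sum_card_fiberwise (f := fun u => u i) (t := Finset.range m)
    (fun u hu => by simpa using h u hu)]
  refine Finset.sum_congr rfl fun j _ => (Finset.card_image_of_injOn ?_).symm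
  intro u hu v hv huv
  simp only [Finset.coe_filter, Set.mem_ofPred_eq] at hu hv
  rw [← Fin.insertNth_self_removeNth i u, ← Fin.insertNth_self_removeNth i v, huv, hu.2, hv.2]

theorem insertNth_mem_level : (i.insertNth j w : Fin (n + 1) → ℕ) ∈ level a d ↔
    j < a i ∧ j ≤ d ∧ w ∈ level (i.removeNth a) (d - j) := by
  rw [mem_level, mem_level, Fin.forall_iff_succAbove i, Fin.sum_univ_succAbove _ i]
  simp only [Fin.insertNth_apply_same, Fin.insertNth_apply_succAbove, Fin.removeNth]
  constructor
  · rintro ⟨⟨hj, hw⟩, hsum⟩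
    exact ⟨hj, by omega, hw, by omega⟩
  · rintro ⟨hj, hjd, hw, hsum⟩
    exact ⟨⟨hj, hw⟩, by omega⟩

theorem removeNth_mem_level {u : Fin (n + 1) → ℕ} (hu : u ∈ level a d) :
    i.removeNth u ∈ level (i.removeNth a) (d - u i) := by
  rw [← Fin.insertNth_self_removeNth i u, insertNth_mem_level] at hu
  exact hu.2.2

theorem slice_subset_level (hA : A ⊆ level a d) : slice i j A ⊆ level (i.removeNth a) (d - j) :=
  fun _ hw => (insertNth_mem_level.1 (hA (mem_slice.1 hw))).2.2

theorem insertNth_add_single_self (i : Fin (n + 1)) (j : ℕ) (w : Fin n → ℕ) :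
    (i.insertNth j w : Fin (n + 1) → ℕ) + Pi.single i 1 = i.insertNth (j + 1) w := by
  refine (Fin.insertNth_eq_iff.2 ⟨?_, ?_⟩).symm
  · simp
  · ext r
    simp [Fin.removeNth]

theorem insertNth_add_single_succAbove (i : Fin (n + 1)) (j : ℕ) (w : Fin n → ℕ) (p : Fin n) :
    (i.insertNth j w : Fin (n + 1) → ℕ) + Pi.single (i.succAbove p) 1
      = i.insertNth j (w + Pi.single p 1) := by
  refine (Fin.insertNth_eq_iff.2 ⟨?_, ?_⟩).symm
  · simp
  · ext r
    simp [Fin.removeNth, Pi.single_apply]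

theorem mem_slice_upShadow : w ∈ slice i j (upShadow a A) ↔ j < a i ∧ (∀ k, w k < i.removeNth a k) ∧
    (w ∈ upShadow (i.removeNth a) (slice i j A) ∨ ∃ j', j = j' + 1 ∧ w ∈ slice i j' A) := by
  rw [mem_slice, mem_upShadow, Fin.forall_iff_succAbove i]
  simp only [Fin.insertNth_apply_same, Fin.insertNth_apply_succAbove]
  rw [and_assoc]
  refine and_congr_right fun _ => and_congr_right fun hw => ⟨?_, ?_⟩
  · rintro ⟨u, hu, k, hk⟩
    rw [← Fin.insertNth_self_removeNth i u] at hk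
    rcases Fin.eq_self_or_eq_succAbove i k with rfl | ⟨r, rfl⟩
    · rw [insertNth_add_single_self, Fin.insertNth_inj] at hk
      exact Or.inr ⟨u k, hk.1, hk.2 ▸ removeNth_mem_slice.2 hu⟩
    · rw [insertNth_add_single_succAbove, Fin.insertNth_inj] at hk
      exact Or.inl (mem_upShadow.2
        ⟨hw, i.removeNth u, hk.1 ▸ removeNth_mem_slice.2 hu, r, hk.2⟩)
  · rintro (h | ⟨j', rfl, h⟩)
    · obtain ⟨-, u, hu, k, rfl⟩ := mem_upShadow.1 h
      exact ⟨_, mem_slice.1 hu, _, (insertNth_add_single_succAbove i j u k).symm⟩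
    · exact ⟨_, mem_slice.1 h, _, (insertNth_add_single_self i j' w).symm⟩

theorem upShadow_slice_subset (hj : j < a i) :
    upShadow (i.removeNth a) (slice i j A) ⊆ slice i j (upShadow a A) := fun _ hw =>
  mem_slice_upShadow.2 ⟨hj, (mem_upShadow.1 hw).1, Or.inl hw⟩

theorem slice_subset_slice_upShadow (hA : A ⊆ level a d) (hj : j + 1 < a i) :
    slice i j A ⊆ slice i (j + 1) (upShadow a A) := fun _ hw =>
  mem_slice_upShadow.2 ⟨hj, (mem_level.1 (slice_subset_level hA hw)).1, Or.inr ⟨j, rfl, hw⟩⟩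

theorem toLex_removeNth_lt_iff {u v : Fin (n + 1) → ℕ} (h : u i = v i) :
    toLex (i.removeNth u) < toLex (i.removeNth v) ↔ toLex u < toLex v := by
  constructor
  · rintro ⟨q, hq, hqlt⟩
    refine ⟨i.succAbove q, fun k hk => ?_, hqlt⟩
    rcases Fin.eq_self_or_eq_succAbove i k with rfl | ⟨r, rfl⟩
    · exact h
    · exact hq r (Fin.succAbove_lt_succAbove_iff.1 hk)
  · rintro ⟨p, hp, hplt⟩
    rcases Fin.eq_self_or_eq_succAbove i p with rfl | ⟨q, rfl⟩
    · exact absurd h hplt.ne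
    · exact ⟨q, fun k hk => hp _ (Fin.succAbove_lt_succAbove_iff.2 hk), hplt⟩

end Slice

section Compression

variable {n : ℕ}

/-- The Clements–Lindström inequality in the box `∏ [0, a i)`: lex segments have the smallest upper
shadow among all subsets of a level with a given number of elements. -/
def ClementsLindstrom (a : Fin n → ℕ) : Prop :=
  ∀ d, ∀ A ⊆ level a d, (upShadow a (lexSegment a d A.card)).card ≤ (upShadow a A).card

/-- `A ⊆ level a d` is compressed in direction `i` if each of its slices in this direction is a lex
segment. -/
def IsCompressed (a : Fin n → ℕ) (d : ℕ) (i : Fin n) (A : Finset (Fin n → ℕ)) : Prop :=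
  ∀ u ∈ A, ∀ v ∈ level a d, u i = v i → toLex u < toLex v → v ∈ A

/-- The compression of `A ⊆ level a d` in direction `i`: each slice of `A` is replaced by the lex
segment with the same number of elements. -/
noncomputable def compression (a : Fin (n + 1) → ℕ) (d : ℕ) (i : Fin (n + 1))
    (A : Finset (Fin (n + 1) → ℕ)) : Finset (Fin (n + 1) → ℕ) :=
  {u ∈ level a d |
    i.removeNth u ∈ lexSegment (i.removeNth a) (d - u i) (slice i (u i) A).card}

variable {a : Fin (n + 1) → ℕ} {d : ℕ} {i : Fin (n + 1)} {A : Finset (Fin (n + 1) → ℕ)}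

theorem compression_subset_level : compression a d i A ⊆ level a d :=
  Finset.filter_subset _ _

theorem slice_compression (hA : A ⊆ level a d) (j : ℕ) :
    slice i j (compression a d i A) = lexSegment (i.removeNth a) (d - j) (slice i j A).card := by
  ext w
  rw [mem_slice, compression, Finset.mem_filter]
  simp only [Fin.insertNth_apply_same, Fin.removeNth_insertNth]
  refine and_iff_right_of_imp fun hw => ?_
  obtain ⟨w', hw'⟩ : (slice i j A).Nonempty :=
    Finset.card_pos.1 ((Nat.zero_le _).trans_lt (Finset.mem_filter.1 hw).2)
  obtain ⟨hj, hjd, -⟩ := insertNth_mem_level.1 (hA (mem_slice.1 hw'))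
  exact insertNth_mem_level.2 ⟨hj, hjd, lexSegment_subset_level _ hw⟩

theorem card_slice_compression (hA : A ⊆ level a d) (j : ℕ) :
    (slice i j (compression a d i A)).card = (slice i j A).card := by
  rw [slice_compression hA, card_lexSegment (Finset.card_le_card (slice_subset_level hA))]

theorem card_compression (hA : A ⊆ level a d) : (compression a d i A).card = A.card := by
  rw [card_eq_sum_card_slice fun u hu => (mem_level.1 (compression_subset_level hu)).1 i,
    card_eq_sum_card_slice fun u hu => (mem_level.1 (hA hu)).1 i]
  exact Finset.sum_congr rfl fun j _ => card_slice_compression hA j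

theorem isCompressed_compression : IsCompressed a d i (compression a d i A) := by
  intro u hu v hv huv hlt
  have hu' := (Finset.mem_filter.1 hu).2
  rw [huv] at hu'
  exact Finset.mem_filter.2 ⟨hv, (isLexSegment_lexSegment _).2 _ hu' _ (removeNth_mem_level hv)
    ((toLex_removeNth_lt_iff huv).2 hlt)⟩

theorem card_upShadow_compression_le (h : ClementsLindstrom (i.removeNth a)) (hA : A ⊆ level a d) :
    (upShadow a (compression a d i A)).card ≤ (upShadow a A).card := by
  have hslice : ∀ j, slice i j (upShadow a (compression a d i A)) ⊆
      lexSegment (i.removeNth a) (d + 1 - j) (slice i j (upShadow a A)).card := by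
    intro j w hw
    have hcard := card_lexSegment
      (Finset.card_le_card (slice_subset_level (i := i) (j := j) (upShadow_subset_level hA)))
    obtain ⟨hj, -, hw' | ⟨j', rfl, hw'⟩⟩ := mem_slice_upShadow.1 hw
    · have hjd : j ≤ d := by
        obtain ⟨-, u, hu, -⟩ := mem_upShadow.1 hw'
        exact (insertNth_mem_level.1 (compression_subset_level (mem_slice.1 hu))).2.1
      rw [slice_compression hA] at hw'
      have hseg := (isLexSegment_lexSegment (a := i.removeNth a) (d := d - j)
        (slice i j A).card).upShadow
      rw [← Nat.sub_add_comm hjd] at hseg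
      refine hseg.subset_of_card_le (isLexSegment_lexSegment _) ?_ hw'
      rw [hcard]
      exact (h _ _ (slice_subset_level hA)).trans (Finset.card_le_card (upShadow_slice_subset hj))
    · rw [slice_compression hA] at hw'
      rw [Nat.add_sub_add_right]
      exact lexSegment_mono (Finset.card_le_card (slice_subset_slice_upShadow hA hj)) hw'
  rw [card_eq_sum_card_slice fun u hu => (mem_upShadow.1 hu).1 i,
    card_eq_sum_card_slice fun u hu => (mem_upShadow.1 hu).1 i]
  refine Finset.sum_le_sum fun j _ => (Finset.card_le_card (hslice j)).trans_eq ?_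
  exact card_lexSegment (Finset.card_le_card (slice_subset_level (upShadow_subset_level hA)))

end Compression

section LexKey

variable {n : ℕ} {A B : Finset (Fin n → ℕ)}

/-- A finite set of exponent vectors as an element of a linear order, in which `A` is smaller than
`B` when the lexicographically smallest element of the symmetric difference lies in `B`. Replacing
elements by lexicographically larger ones decreases the key. -/
def lexKey (A : Finset (Fin n → ℕ)) : Colex (Finset (Lex (Fin n → ℕ))ᵒᵈ) :=
  toColex (A.map (toLex.trans OrderDual.toDual).toEmbedding)

theorem lexKey_injective : Function.Injective (lexKey (n := n)) := fun _ _ h =>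
  Finset.map_injective _ (toColex.injective h)

theorem lexKey_le_lexKey :
    lexKey A ≤ lexKey B ↔ ∀ x ∈ A, x ∉ B → ∃ y ∈ B, y ∉ A ∧ toLex y ≤ toLex x := by
  simp only [lexKey, Finset.Colex.toColex_le_toColex, Finset.mem_map_equiv]
  exact ⟨fun h x => @h (OrderDual.toDual (toLex x)), fun h x => h (ofLex (OrderDual.ofDual x))⟩

theorem lexKey_insert_erase_lt {x y : Fin n → ℕ} (hx : x ∈ A) (hy : y ∉ A)
    (hxy : toLex x < toLex y) : lexKey (insert y (A.erase x)) < lexKey A := by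
  have hxC : x ∉ insert y (A.erase x) := by
    simpa using fun h : x = y => hxy.ne (congrArg toLex h)
  refine lt_of_le_of_ne (lexKey_le_lexKey.2 fun z hz hzA => ⟨x, hx, hxC, ?_⟩) fun h => ?_
  · rcases Finset.mem_insert.1 hz with rfl | hz
    · exact hxy.le
    · exact absurd (Finset.mem_of_mem_erase hz) hzA
  · exact hxC (by rwa [lexKey_injective h])

theorem lexKey_compression_le {a : Fin (n + 1) → ℕ} {d : ℕ} {i : Fin (n + 1)}
    {A : Finset (Fin (n + 1) → ℕ)} (hA : A ⊆ level a d) :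
    lexKey (compression a d i A) ≤ lexKey A := by
  refine lexKey_le_lexKey.2 fun x hx hxA => ?_
  have hnot : ¬ slice i (x i) A ⊆ slice i (x i) (compression a d i A) := by
    intro hsub
    have heq := Finset.eq_of_subset_of_card_le hsub (card_slice_compression hA _).le
    exact hxA (removeNth_mem_slice.1 (heq ▸ removeNth_mem_slice.2 hx))
  obtain ⟨w, hwA, hwC⟩ := Finset.not_subset.1 hnot
  rw [mem_slice] at hwA hwC
  refine ⟨_, hwA, hwC, not_lt.1 fun hlt => hwC ?_⟩
  exact isCompressed_compression x hx _ (hA hwA) (by simp) hlt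

end LexKey

section Swap

variable {m : ℕ} {a : Fin (m + 3) → ℕ} {d : ℕ} {A : Finset (Fin (m + 3) → ℕ)}
  {x y : Fin (m + 3) → ℕ}

theorem toLex_lt_of_add_single_last_eq {n : ℕ} {u w : Fin (n + 1) → ℕ} {i : Fin (n + 1)}
    (hi : i ≠ Fin.last n) (h : w + Pi.single (Fin.last n) 1 = u + Pi.single i 1) :
    toLex u < toLex w := by
  have hval := fun k => congrFun h k
  simp only [Pi.add_apply] at hval
  refine ⟨i, fun j hj => ?_, ?_⟩
  · simpa [hj.ne, (hj.trans_le (Fin.le_last i)).ne] using (hval j).symm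
  · have := hval i
    simp only [Pi.single_eq_same, Pi.single_eq_of_ne hi] at this
    simp only [Pi.toLex_apply]
    omega

theorem exists_mem_last_add_one_eq (hA : A ⊆ level a d) (hcomp : IsCompressed a d 0 A) (hx : x ∈ A)
    (hlast : 0 < x (Fin.last _)) {i : Fin (m + 3)} (hi0 : i ≠ 0) (hil : i ≠ Fin.last _)
    (hi : x i + 1 < a i) : ∃ w ∈ A, w 0 = x 0 ∧ w (Fin.last _) + 1 = x (Fin.last _) := by
  obtain ⟨w, hw, heq⟩ := exists_transfer (hA hx) hil hi hlast
  have hw0 : w 0 = x 0 := by simpa [hi0.symm, Fin.ext_iff] using congrFun heq 0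
  have hwl : w (Fin.last _) + 1 = x (Fin.last _) := by
    simpa [hil.symm] using congrFun heq (Fin.last _)
  exact ⟨w, hcomp x hx w hw hw0.symm (toLex_lt_of_add_single_last_eq hil heq), hw0, hwl⟩

theorem exists_notMem_last_eq_add_one (hcomp : IsCompressed a d 0 A) (hy : y ∈ level a d)
    (hyA : y ∉ A) (hlast : y (Fin.last _) + 1 < a (Fin.last _)) {i : Fin (m + 3)} (hi0 : i ≠ 0)
    (hil : i ≠ Fin.last _) (hi : 0 < y i) :
    ∃ w ∈ level a d, w ∉ A ∧ w 0 = y 0 ∧ w (Fin.last _) = y (Fin.last _) + 1 := by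
  obtain ⟨w, hw, heq⟩ := exists_transfer hy hil.symm hlast hi
  have hw0 : w 0 = y 0 := by simpa [hi0.symm, Fin.ext_iff] using congrFun heq 0
  have hwl : w (Fin.last _) = y (Fin.last _) + 1 := by
    simpa [hil.symm] using congrFun heq (Fin.last _)
  exact ⟨w, hw, fun hwA =>
    hyA (hcomp w hwA y hy hw0 (toLex_lt_of_add_single_last_eq hil heq.symm)), hw0, hwl⟩

theorem exists_inner_lt_or_pos (ha : a 0 ≤ a 1) (hx : x ∈ level a d) (hy : y ∈ level a d)
    (hlast : y (Fin.last _) < x (Fin.last _)) :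
    ∃ i, i ≠ 0 ∧ i ≠ Fin.last _ ∧ (x i + 1 < a i ∨ 0 < y i) := by
  by_contra! hinner
  have h10 : (1 : Fin (m + 3)) ≠ 0 := by simp
  have h1l : (1 : Fin (m + 3)) ≠ Fin.last _ := by simp [Fin.ext_iff]
  have hl0 : Fin.last (m + 2) ≠ 0 := by simp [Fin.ext_iff]
  have hx1 := (hinner 1 h10 h1l).1
  have hy0 := (mem_level.1 hy).1 0
  have hysum : ∑ i, y i = y 0 + y (Fin.last _) := by
    rw [← Finset.sum_pair hl0.symm]
    refine (Finset.sum_subset (Finset.subset_univ _) fun i _ hi => ?_).symm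
    simp only [Finset.mem_insert, Finset.mem_singleton, not_or] at hi
    exact Nat.le_zero.1 (hinner i hi.1 hi.2).2
  have hxsum : x 1 + x (Fin.last _) ≤ ∑ i, x i := by
    rw [← Finset.sum_pair h1l]
    exact Finset.sum_le_sum_of_subset (Finset.subset_univ _)
  have := (mem_level.1 hx).2
  have := (mem_level.1 hy).2
  omega

theorem last_lt_last_of_isCompressed (ha : a 0 ≤ a 1) (hA : A ⊆ level a d)
    (hcomp : ∀ i, IsCompressed a d i A) (hx : x ∈ A) (hy : y ∈ level a d) (hyA : y ∉ A)
    (h0 : x 0 < y 0) : x (Fin.last _) < y (Fin.last _) := by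
  suffices key : ∀ k x y, x ∈ A → y ∈ level a d → y ∉ A → x 0 < y 0 →
      x (Fin.last _) ≠ y (Fin.last _) + k by
    by_contra! hle
    exact key _ x y hx hy hyA h0 (Nat.add_sub_of_le hle).symm
  intro k
  induction k with
  | zero =>
    intro x y hx hy hyA h0 hk
    exact hyA (hcomp _ x hx y hy hk ⟨0, fun j hj => absurd hj (Fin.not_lt_zero j), h0⟩)
  | succ k ih =>
    intro x y hx hy hyA h0 hk
    obtain ⟨i, hi0, hil, hi | hi⟩ := exists_inner_lt_or_pos ha (hA hx) hy (by omega)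
    · obtain ⟨w, hw, hw0, hwl⟩ :=
        exists_mem_last_add_one_eq hA (hcomp 0) hx (by omega) hi0 hil hi
      exact ih w y hw hy hyA (hw0 ▸ h0) (by omega)
    · have hxl := (mem_level.1 (hA hx)).1 (Fin.last _)
      obtain ⟨w, hw, hwA, hw0, hwl⟩ :=
        exists_notMem_last_eq_add_one (hcomp 0) hy hyA (by omega) hi0 hil hi
      exact ih x w hx hw hwA (hw0 ▸ h0) (by omega)

theorem upShadow_insert_erase_subset (hy : y ∈ level a d)
    (hmax : ∀ z ∈ level a d, toLex y < toLex z → z ∈ A) (hxy : toLex x < toLex y)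
    (hlast : 0 < y (Fin.last _)) : upShadow a (insert y (A.erase x)) ⊆
      insert (y + Pi.single (Fin.last _) 1) (upShadow a (A.erase x)) := by
  intro z hz
  obtain ⟨hza, w, hw, i, rfl⟩ := mem_upShadow.1 hz
  rw [Finset.mem_insert]
  rcases Finset.mem_insert.1 hw with rfl | hw
  · by_cases hil : i = Fin.last _
    · exact Or.inl (hil ▸ rfl)
    · obtain ⟨t, ht, heq⟩ := exists_transfer hy hil (by simpa using hza i) hlast
      have hwt := toLex_lt_of_add_single_last_eq hil heq
      have htx : t ≠ x := by
        rintro rfl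
        exact lt_asymm hxy hwt
      exact Or.inr (mem_upShadow.2
        ⟨hza, t, Finset.mem_erase.2 ⟨htx, hmax t ht hwt⟩, _, heq.symm⟩)
  · exact Or.inr (mem_upShadow.2 ⟨hza, w, hw, i, rfl⟩)

theorem add_single_last_notMem_upShadow_erase (hmin : ∀ z ∈ A, toLex x ≤ toLex z) :
    x + Pi.single (Fin.last _) 1 ∉ upShadow a (A.erase x) := by
  intro h
  obtain ⟨-, w, hw, i, heq⟩ := mem_upShadow.1 h
  rw [Finset.mem_erase] at hw
  have hil : i ≠ Fin.last _ := by
    rintro rfl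
    exact hw.1 (add_right_cancel heq).symm
  exact (hmin w hw.2).not_gt (toLex_lt_of_add_single_last_eq hil heq)

theorem exists_card_upShadow_insert_erase_le (ha : a 0 ≤ a 1) (hA : A ⊆ level a d)
    (hcomp : ∀ i, IsCompressed a d i A) (hseg : ¬ IsLexSegment a d A) :
    ∃ x ∈ A, ∃ y ∈ level a d, y ∉ A ∧ toLex x < toLex y ∧
      (upShadow a (insert y (A.erase x))).card ≤ (upShadow a A).card := by
  obtain ⟨u, hu, v, hv, huv, hvA⟩ :
      ∃ u ∈ A, ∃ v ∈ level a d, toLex u < toLex v ∧ v ∉ A := by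
    by_contra! h
    exact hseg ⟨hA, h⟩
  obtain ⟨x, hx, hxmin⟩ := Finset.exists_min_image A toLex ⟨u, hu⟩
  obtain ⟨y, hy, hymax⟩ :=
    Finset.exists_max_image (level a d \ A) toLex ⟨v, Finset.mem_sdiff.2 ⟨hv, hvA⟩⟩
  have hxy : toLex x < toLex y :=
    (hxmin u hu).trans_lt (huv.trans_le (hymax v (Finset.mem_sdiff.2 ⟨hv, hvA⟩)))
  rw [Finset.mem_sdiff] at hy
  have h0 : x 0 < y 0 := by
    obtain ⟨p, hp, hplt⟩ := id hxy
    rcases eq_or_ne p 0 with rfl | hp0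
    · exact hplt
    · exact absurd (hcomp 0 x hx y hy.1 (hp 0 (Fin.pos_iff_ne_zero.2 hp0)) hxy) hy.2
  have hlast := last_lt_last_of_isCompressed ha hA hcomp hx hy.1 hy.2 h0
  have hsub := upShadow_insert_erase_subset hy.1 (fun z hz hyz => by
    by_contra hzA
    exact (hymax z (Finset.mem_sdiff.2 ⟨hz, hzA⟩)).not_gt hyz) hxy (by omega)
  refine ⟨x, hx, y, hy.1, hy.2, hxy, ?_⟩
  by_cases hya : y (Fin.last _) + 1 < a (Fin.last _)
  · have hxS : x + Pi.single (Fin.last _) 1 ∈ upShadow a A :=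
      add_single_mem_upShadow hA hx (by omega)
    calc (upShadow a (insert y (A.erase x))).card
        ≤ (upShadow a (A.erase x)).card + 1 :=
          (Finset.card_le_card hsub).trans (Finset.card_insert_le _ _)
      _ = (insert (x + Pi.single (Fin.last _) 1) (upShadow a (A.erase x))).card :=
          (Finset.card_insert_of_notMem (add_single_last_notMem_upShadow_erase hxmin)).symm
      _ ≤ (upShadow a A).card := Finset.card_le_card
          (Finset.insert_subset hxS (upShadow_mono (Finset.erase_subset _ _)))
  · refine Finset.card_le_card fun z hz => ?_
    rcases Finset.mem_insert.1 (hsub hz) with rfl | hz'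
    · exact absurd (by simpa using (mem_upShadow.1 hz).1 (Fin.last _)) hya
    · exact upShadow_mono (Finset.erase_subset _ _) hz'

end Swap

section TwoVariables

variable {a : Fin 2 → ℕ} {d : ℕ} {u v : Fin 2 → ℕ} {A L : Finset (Fin 2 → ℕ)}

theorem mem_level_two : u ∈ level a d ↔ u 0 < a 0 ∧ u 1 < a 1 ∧ u 0 + u 1 = d := by
  rw [mem_level, Fin.forall_fin_two, Fin.sum_univ_two, and_assoc]

theorem eq_of_mem_level_two (hu : u ∈ level a d) (hv : v ∈ level a d) (h : u 0 = v 0) :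
    u = v := by
  rw [mem_level_two] at hu hv
  refine funext (Fin.forall_fin_two.2 ⟨h, by omega⟩)

theorem IsLexSegment.mem_of_lt_two (hL : IsLexSegment a d L) (hu : u ∈ L) (hv : v ∈ level a d)
    (h : u 0 < v 0) : v ∈ L :=
  hL.2 u hu v hv ⟨0, fun j hj => absurd hj (Fin.not_lt_zero j), h⟩

/- The shadow of a segment `{x^p y^q, x^(p-1) y^(q+1), ...}` consists of the multiples by `x` and
one further element, the multiple by `y` of the smallest element. -/
theorem card_upShadow_le_card_add_one_two (hL : IsLexSegment a d L) :
    (upShadow a L).card ≤ L.card + 1 := by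
  rcases L.eq_empty_or_nonempty with rfl | hne
  · simp [upShadow]
  obtain ⟨u, hu, hmin⟩ := Finset.exists_min_image L (fun u => u 0) hne
  have hsub : upShadow a L ⊆
      insert (u + Pi.single 1 1) (L.image fun w => w + Pi.single 0 1) := by
    intro z hz
    obtain ⟨hza, w, hw, i, rfl⟩ := mem_upShadow.1 hz
    rw [Finset.mem_insert, Finset.mem_image]
    obtain rfl | rfl : i = 0 ∨ i = 1 := by omega
    · exact Or.inr ⟨w, hw, rfl⟩
    · rcases (hmin w hw).eq_or_lt with h | h
      · exact Or.inl (by rw [eq_of_mem_level_two (hL.1 hu) (hL.1 hw) h])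
      · obtain ⟨t, ht, heq⟩ := exists_transfer (hL.1 hw) (i := 1) (j := 0) (by simp)
          (by simpa using hza 1) (Nat.zero_lt_of_lt h)
        have ht0 : t 0 + 1 = w 0 := by simpa using congrFun heq 0
        refine Or.inr ⟨t, ?_, heq⟩
        rcases (show u 0 ≤ t 0 by omega).eq_or_lt with h' | h'
        · exact eq_of_mem_level_two (hL.1 hu) ht h' ▸ hu
        · exact hL.mem_of_lt_two hu ht h'
  calc (upShadow a L).card ≤ (L.image fun w => w + Pi.single 0 1).card + 1 :=
        (Finset.card_le_card hsub).trans (Finset.card_insert_le _ _)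
    _ ≤ L.card + 1 := Nat.add_le_add_right Finset.card_image_le 1

theorem card_add_one_le_card_upShadow_two (h0 : d + 1 < a 0) (h1 : d + 1 < a 1)
    (hA : A ⊆ level a d) (hne : A.Nonempty) : A.card + 1 ≤ (upShadow a A).card := by
  obtain ⟨u, hu, hmin⟩ := Finset.exists_min_image A (fun u => u 0) hne
  have hmem : ∀ w ∈ A, ∀ i, w + Pi.single i 1 ∈ upShadow a A := by
    intro w hw i
    have := (mem_level_two.1 (hA hw)).2.2
    obtain rfl | rfl : i = 0 ∨ i = 1 := by omega
    all_goals exact add_single_mem_upShadow hA hw (by omega)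
  have hsub : insert (u + Pi.single 1 1) (A.image fun w => w + Pi.single 0 1) ⊆ upShadow a A :=
    Finset.insert_subset (hmem u hu 1) (Finset.image_subset_iff.2 fun w hw => hmem w hw 0)
  refine le_trans ?_ (Finset.card_le_card hsub)
  rw [Finset.card_insert_of_notMem, Finset.card_image_of_injective _ (add_left_injective _)]
  rw [Finset.mem_image]
  rintro ⟨w, hw, heq⟩
  have := hmin w hw
  have : w 0 + 1 = u 0 := by simpa using congrFun heq 0
  omega

theorem card_upShadow_le_card_two (h : a 0 ≤ d + 1) (hL : IsLexSegment a d L) :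
    (upShadow a L).card ≤ L.card := by
  have hsub : upShadow a L ⊆ L.image fun w => w + Pi.single 1 1 := by
    intro z hz
    obtain ⟨hza, w, hw, i, rfl⟩ := mem_upShadow.1 hz
    rw [Finset.mem_image]
    obtain rfl | rfl : i = 0 ∨ i = 1 := by omega
    · have hw0 : w 0 + 1 < a 0 := by simpa using hza 0
      have hwd := (mem_level_two.1 (hL.1 hw)).2.2
      obtain ⟨t, ht, heq⟩ := exists_transfer (hL.1 hw) (i := 0) (j := 1) (by simp) hw0 (by omega)
      have ht0 : t 0 = w 0 + 1 := by simpa using congrFun heq 0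
      exact ⟨t, hL.mem_of_lt_two hw ht (by omega), heq⟩
    · exact ⟨w, hw, rfl⟩
  exact (Finset.card_le_card hsub).trans Finset.card_image_le

/- If `y` is missing from `A`, multiply the elements of `A` below `y` by the first variable and
those above `y` by the second one: these products stay distinct. -/
theorem card_le_card_upShadow_two (hA : A ⊆ level a d) (hne : A ≠ level a d) :
    A.card ≤ (upShadow a A).card := by
  obtain ⟨y, hy, hyA⟩ := Finset.exists_of_ssubset (hA.ssubset_of_ne hne)
  have hyl := mem_level_two.1 hy
  have hne0 : ∀ u ∈ A, u 0 ≠ y 0 := fun u hu h => hyA (eq_of_mem_level_two (hA hu) hy h ▸ hu)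
  refine Finset.card_le_card_of_injOn
    (fun u => if u 0 < y 0 then u + Pi.single 0 1 else u + Pi.single 1 1) (fun u hu => ?_)
    (fun u hu v hv huv => ?_)
  · have hul := mem_level_two.1 (hA hu)
    have := hne0 u hu
    dsimp only
    split_ifs
    all_goals exact add_single_mem_upShadow hA hu (by omega)
  · have := hne0 u hu
    have := hne0 v hv
    have huv0 := congrFun huv 0
    refine eq_of_mem_level_two (hA hu) (hA hv) ?_
    dsimp only at huv0
    split_ifs at huv0 <;> simp at huv0 <;> omega

theorem clementsLindstrom_two (h : a 0 ≤ a 1) : ClementsLindstrom a := by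
  intro d A hA
  have hcard := card_lexSegment (Finset.card_le_card hA)
  have hseg := isLexSegment_lexSegment (a := a) (d := d) A.card
  rcases A.eq_empty_or_nonempty with rfl | hne
  · simp [lexSegment]
  rcases lt_or_ge (d + 1) (a 0) with hd | hd
  · calc (upShadow a (lexSegment a d A.card)).card
        ≤ A.card + 1 := by
          simpa only [hcard] using card_upShadow_le_card_add_one_two hseg
      _ ≤ (upShadow a A).card :=
          card_add_one_le_card_upShadow_two hd (hd.trans_le h) hA hne
  · rcases eq_or_ne A (level a d) with rfl | hAl
    · exact Finset.card_le_card (upShadow_mono (lexSegment_subset_level _))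
    · calc (upShadow a (lexSegment a d A.card)).card
          ≤ A.card := by simpa only [hcard] using card_upShadow_le_card_two hd hseg
        _ ≤ (upShadow a A).card := card_le_card_upShadow_two hA hAl

end TwoVariables

section ClementsLindstrom

theorem clementsLindstrom_of_card_level_le_one {n : ℕ} {a : Fin n → ℕ}
    (h : ∀ d, (level a d).card ≤ 1) : ClementsLindstrom a := by
  intro d A hA
  refine Finset.card_le_card (upShadow_mono ?_)
  rcases A.eq_empty_or_nonempty with rfl | hne
  · simp [lexSegment]
  · rw [Finset.eq_of_subset_of_card_le hA ((h d).trans (Finset.card_pos.2 hne))]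
    exact lexSegment_subset_level _

theorem clementsLindstrom_of_removeNth {m : ℕ} {a : Fin (m + 3) → ℕ} (ha : a 0 ≤ a 1)
    (h : ∀ i : Fin (m + 3), ClementsLindstrom (i.removeNth a)) : ClementsLindstrom a := by
  intro d A hA
  set F : Finset (Finset (Fin (m + 3) → ℕ)) := {B ∈ (level a d).powerset |
    B.card = A.card ∧ (upShadow a B).card ≤ (upShadow a A).card} with hF
  have mem_F : ∀ B, B ∈ F ↔
      B ⊆ level a d ∧ B.card = A.card ∧ (upShadow a B).card ≤ (upShadow a A).card := by
    simp [hF]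
  obtain ⟨B, hBF, hmin⟩ := F.exists_min_image lexKey ⟨A, (mem_F A).2 ⟨hA, rfl, le_rfl⟩⟩
  obtain ⟨hB, hBA, hBs⟩ := (mem_F B).1 hBF
  have hcomp : ∀ i, IsCompressed a d i B := by
    intro i
    have hCF : compression a d i B ∈ F := (mem_F _).2 ⟨compression_subset_level,
      (card_compression hB).trans hBA, (card_upShadow_compression_le (h i) hB).trans hBs⟩
    rw [← lexKey_injective ((lexKey_compression_le hB).antisymm (hmin _ hCF))]
    exact isCompressed_compression
  have hseg : IsLexSegment a d B := by
    by_contra hseg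
    obtain ⟨x, hx, y, hy, hyB, hxy, hle⟩ := exists_card_upShadow_insert_erase_le ha hB hcomp hseg
    have hyB' : y ∉ B.erase x := fun hmem => hyB (Finset.mem_of_mem_erase hmem)
    refine (lexKey_insert_erase_lt hx hyB hxy).not_ge
      (hmin _ ((mem_F _).2 ⟨?_, ?_, hle.trans hBs⟩))
    · exact Finset.insert_subset hy ((Finset.erase_subset _ _).trans hB)
    · rw [Finset.card_insert_of_notMem hyB', Finset.card_erase_add_one hx, hBA]
  rw [← hBA, ← hseg.eq_lexSegment]
  exact hBs

theorem clementsLindstrom : ∀ {n : ℕ} {a : Fin n → ℕ}, Monotone a → ClementsLindstrom a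
  | 0, _, _ => clementsLindstrom_of_card_level_le_one fun _ =>
      Finset.card_le_one.2 fun _ _ _ _ => Subsingleton.elim _ _
  | 1, _, _ => clementsLindstrom_of_card_level_le_one fun d => Finset.card_le_one.2
      fun u hu v hv => by
        have hu' := (mem_level.1 hu).2
        have hv' := (mem_level.1 hv).2
        rw [Fin.sum_univ_one] at hu' hv'
        exact funext fun i => by rw [Subsingleton.elim i 0, hu', hv']
  | 2, _, hmono => clementsLindstrom_two (hmono (Fin.zero_le 1))
  | _ + 3, _, hmono => clementsLindstrom_of_removeNth (hmono (Fin.zero_le 1)) fun i =>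
      clementsLindstrom (hmono.comp (Fin.strictMono_succAbove i).monotone)

end ClementsLindstrom

section CardLevel

variable {n : ℕ} {a : Fin (n + 1) → ℕ} {d : ℕ} {i : Fin (n + 1)}

theorem slice_level {j : ℕ} (hj : j < a i) (hjd : j ≤ d) :
    slice i j (level a d) = level (i.removeNth a) (d - j) := by
  ext w
  rw [mem_slice, insertNth_mem_level, and_iff_right hj, and_iff_right hjd]

theorem card_level_of_lt (hd : d < a i) :
    (level a d).card = ∑ j ∈ Finset.range (d + 1), (level (i.removeNth a) (d - j)).card := by
  rw [card_eq_sum_card_slice (i := i) (m := d + 1) fun u hu => ?_]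
  · refine Finset.sum_congr rfl fun j hj => ?_
    rw [Finset.mem_range] at hj
    rw [slice_level (by omega) (by omega)]
  · rw [Nat.lt_succ_iff, ← (mem_level.1 hu).2]
    exact Finset.single_le_sum (fun _ _ => Nat.zero_le _) (Finset.mem_univ i)

theorem card_level_add_sum : (level a (d + a i)).card +
      ∑ j ∈ Finset.range (d + 1), (level (i.removeNth a) (d - j)).card =
    ∑ j ∈ Finset.range (d + a i + 1), (level (i.removeNth a) (d + a i - j)).card := by
  rw [card_eq_sum_card_slice (i := i) fun u hu => (mem_level.1 hu).1 i,
    show d + a i + 1 = a i + (d + 1) by omega, Finset.sum_range_add _ (a i) (d + 1)]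
  congr 1
  · refine Finset.sum_congr rfl fun j hj => ?_
    rw [Finset.mem_range] at hj
    rw [slice_level hj (by omega)]
  · refine Finset.sum_congr rfl fun j _ => ?_
    congr 2
    omega

end CardLevel

section BoxComplement

variable {n : ℕ} {a : Fin n → ℕ} {d t : ℕ} {u v : Fin n → ℕ}

/-- The complement of an exponent vector in the box `∏ [0, a i)`, that is, the exponent of
`x_1^{a_1 - 1} ⋯ x_n^{a_n - 1} / x^u`. -/
def boxCompl (a u : Fin n → ℕ) : Fin n → ℕ := fun i => a i - 1 - u i

theorem boxCompl_boxCompl (h : ∀ i, u i < a i) : boxCompl a (boxCompl a u) = u := by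
  funext i
  have := h i
  simp only [boxCompl]
  omega

theorem boxCompl_mem_level (hdt : d + t = ∑ i, (a i - 1)) (hu : u ∈ level a d) :
    boxCompl a u ∈ level a t := by
  rw [mem_level] at hu ⊢
  refine ⟨fun i => ?_, ?_⟩
  · have := hu.1 i
    simp only [boxCompl]
    omega
  · have hsum : ∑ i, boxCompl a u i + ∑ i, u i = ∑ i, (a i - 1) := by
      rw [← Finset.sum_add_distrib]
      refine Finset.sum_congr rfl fun i _ => Nat.sub_add_cancel ?_
      have := hu.1 i
      omega
    omega

theorem toLex_boxCompl_lt (hv : ∀ i, v i < a i) (h : toLex u < toLex v) :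
    toLex (boxCompl a v) < toLex (boxCompl a u) := by
  obtain ⟨p, hp, hlt⟩ := h
  have := hv p
  simp only [Pi.toLex_apply] at hp hlt
  refine ⟨p, fun j hj => ?_, ?_⟩
  · simp only [Pi.toLex_apply, boxCompl, hp j hj]
  · simp only [Pi.toLex_apply, boxCompl]
    omega

theorem boxCompl_add_single {i : Fin n} (h : ∀ j, (u + Pi.single i 1 : Fin n → ℕ) j < a j) :
    boxCompl a (u + Pi.single i 1) + Pi.single i 1 = boxCompl a u := by
  funext k
  have hk := h k
  by_cases hki : k = i
  · subst hki
    simp only [boxCompl, Pi.add_apply, Pi.single_eq_same] at hk ⊢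
    omega
  · simp [boxCompl, hki]

theorem injOn_boxCompl : Set.InjOn (boxCompl a) (level a d) := by
  intro u hu v hv huv
  rw [← boxCompl_boxCompl (mem_level.1 hu).1, huv, boxCompl_boxCompl (mem_level.1 hv).1]

theorem image_boxCompl_level (hdt : d + t = ∑ i, (a i - 1)) :
    (level a d).image (boxCompl a) = level a t := by
  refine Finset.Subset.antisymm
    (Finset.image_subset_iff.2 fun u hu => boxCompl_mem_level hdt hu) fun u hu => ?_
  exact Finset.mem_image.2
    ⟨_, boxCompl_mem_level (by omega) hu, boxCompl_boxCompl (mem_level.1 hu).1⟩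

theorem card_level_eq_of_add_eq (hdt : d + t = ∑ i, (a i - 1)) :
    (level a d).card = (level a t).card := by
  rw [← image_boxCompl_level hdt, Finset.card_image_of_injOn injOn_boxCompl]

theorem level_zero (ha : ∀ i, 1 ≤ a i) : level a 0 = {0} := by
  ext u
  rw [mem_level, Finset.sum_eq_zero_iff, Finset.mem_singleton, funext_iff]
  simp only [Finset.mem_univ, true_implies, Pi.zero_apply]
  exact and_iff_right_of_imp fun h i => (h i).trans_lt (ha i)

theorem card_level_sum (ha : ∀ i, 1 ≤ a i) : (level a (∑ i, (a i - 1))).card = 1 := by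
  rw [card_level_eq_of_add_eq (t := 0) (by omega), level_zero ha, Finset.card_singleton]

theorem level_eq_empty (hd : ∑ i, (a i - 1) < d) : level a d = ∅ := by
  refine Finset.eq_empty_of_forall_notMem fun u hu => ?_
  obtain ⟨hua, rfl⟩ := mem_level.1 hu
  exact hd.not_ge (Finset.sum_le_sum fun i _ => Nat.le_sub_one_of_lt (hua i))

theorem isLexSegment_image_boxCompl (hdt : d + t = ∑ i, (a i - 1)) (c : ℕ) :
    IsLexSegment a t ((level a d \ lexSegment a d c).image (boxCompl a)) := by
  refine ⟨fun w hw => ?_, fun w hw v hv hwv => ?_⟩ <;>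
    obtain ⟨u, hu, rfl⟩ := Finset.mem_image.1 hw <;> rw [Finset.mem_sdiff] at hu
  · exact boxCompl_mem_level hdt hu.1
  · have hvd : boxCompl a v ∈ level a d := boxCompl_mem_level (by omega) hv
    have hvu := toLex_boxCompl_lt (mem_level.1 hv).1 hwv
    rw [boxCompl_boxCompl (mem_level.1 hu.1).1] at hvu
    refine Finset.mem_image.2 ⟨_, Finset.mem_sdiff.2 ⟨hvd, fun h => hu.2 ?_⟩,
      boxCompl_boxCompl (mem_level.1 hv).1⟩
    exact (isLexSegment_lexSegment c).2 _ h u hu.1 hvu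

theorem boxCompl_mem_lexSegment_iff (hdt : d + t = ∑ i, (a i - 1)) {c : ℕ}
    (hc : c ≤ (level a d).card) (hu : u ∈ level a d) :
    boxCompl a u ∈ lexSegment a t ((level a d).card - c) ↔ u ∉ lexSegment a d c := by
  have hcard : ((level a d \ lexSegment a d c).image (boxCompl a)).card = (level a d).card - c := by
    rw [Finset.card_image_of_injOn
        (injOn_boxCompl.mono (Finset.coe_subset.2 Finset.sdiff_subset)),
      Finset.card_sdiff_of_subset (lexSegment_subset_level c), card_lexSegment hc]
  rw [← hcard, ← (isLexSegment_image_boxCompl hdt c).eq_lexSegment, Finset.mem_image]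
  constructor
  · rintro ⟨v, hv, hvu⟩
    rw [Finset.mem_sdiff] at hv
    exact injOn_boxCompl hv.1 hu hvu ▸ hv.2
  · exact fun h => ⟨u, Finset.mem_sdiff.2 ⟨hu, h⟩, rfl⟩

theorem card_upShadow_lexSegment_le_of_compl (hdt : d + 1 + t = ∑ i, (a i - 1)) {b c : ℕ}
    (hc : c ≤ (level a d).card) (hb : b ≤ (level a (d + 1)).card)
    (h : (upShadow a (lexSegment a t ((level a (d + 1)).card - b))).card + c ≤ (level a d).card) :
    (upShadow a (lexSegment a d c)).card ≤ b := by
  refine (Finset.card_le_card fun z hz => ?_).trans_eq (card_lexSegment hb)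
  by_contra hzb
  have hzl := upShadow_subset_level (lexSegment_subset_level c) hz
  obtain ⟨hza, u, hu, i, rfl⟩ := mem_upShadow.1 hz
  have hul := lexSegment_subset_level c hu
  have hcompl : boxCompl a u ∈ upShadow a (lexSegment a t ((level a (d + 1)).card - b)) :=
    mem_upShadow.2 ⟨(mem_level.1 (boxCompl_mem_level (t := t + 1) (by omega) hul)).1, _,
      (boxCompl_mem_lexSegment_iff hdt hb hzl).2 hzb, i, (boxCompl_add_single hza).symm⟩
  have hsub : upShadow a (lexSegment a t ((level a (d + 1)).card - b)) ⊆
      lexSegment a (t + 1) ((level a d).card - c) := by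
    refine (isLexSegment_lexSegment _).upShadow.subset_of_card_le (isLexSegment_lexSegment _) ?_
    rw [card_lexSegment]
    · omega
    · rw [← card_level_eq_of_add_eq (d := d) (t := t + 1) (by omega)]
      omega
  exact (boxCompl_mem_lexSegment_iff (by omega) hc hul).1 (hsub hcompl) hu

end BoxComplement

section Stack

variable {n : ℕ} {a : Fin (n + 1) → ℕ} {i : Fin (n + 1)} {M : ℕ → ℕ → Finset (Fin n → ℕ)}
  {d j : ℕ}

/-- The set of exponent vectors of degree `d` whose slice `u i = j`, which lives in degree `d - j`,
is `M (d - j) j`; the first argument of `M` is always the degree. -/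
def stack (a : Fin (n + 1) → ℕ) (i : Fin (n + 1)) (M : ℕ → ℕ → Finset (Fin n → ℕ)) (d : ℕ) :
    Finset (Fin (n + 1) → ℕ) :=
  {u ∈ level a d | i.removeNth u ∈ M (d - u i) (u i)}

theorem stack_subset_level : stack a i M d ⊆ level a d :=
  Finset.filter_subset _ _

theorem mem_slice_stack {w : Fin n → ℕ} : w ∈ slice i j (stack a i M d) ↔
    (j < a i ∧ j ≤ d ∧ w ∈ level (i.removeNth a) (d - j)) ∧ w ∈ M (d - j) j := by
  rw [mem_slice, stack, Finset.mem_filter, insertNth_mem_level, Fin.insertNth_apply_same,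
    Fin.removeNth_insertNth]

theorem card_stack (hM : ∀ e j, M e j ⊆ level (i.removeNth a) e) (hd : d < a i) :
    (stack a i M d).card = ∑ j ∈ Finset.range (d + 1), (M (d - j) j).card := by
  have hlt : ∀ u ∈ stack a i M d, u i < d + 1 := fun u hu => by
    rw [← (mem_level.1 (stack_subset_level hu)).2, Nat.lt_succ_iff]
    exact Finset.single_le_sum (fun _ _ => Nat.zero_le _) (Finset.mem_univ i)
  rw [card_eq_sum_card_slice hlt]
  refine Finset.sum_congr rfl fun j hj => congrArg Finset.card ?_
  rw [Finset.mem_range] at hj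
  ext w
  rw [mem_slice_stack, and_iff_right_of_imp]
  exact fun hw => ⟨by omega, by omega, hM _ _ hw⟩

theorem upShadow_stack_subset
    (hup : ∀ e j, upShadow (i.removeNth a) (M e j) ⊆ M (e + 1) j)
    (hsucc : ∀ e j, M e j ⊆ M e (j + 1)) :
    upShadow a (stack a i M d) ⊆ stack a i M (d + 1) := by
  intro v hv
  refine Finset.mem_filter.2 ⟨upShadow_subset_level stack_subset_level hv, ?_⟩
  obtain ⟨-, -, hw | ⟨j, hj, hw⟩⟩ := mem_slice_upShadow.1 (removeNth_mem_slice (i := i).2 hv)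
  · obtain ⟨hlt, w, hw, k, hk⟩ := mem_upShadow.1 hw
    obtain ⟨⟨-, hle, -⟩, hwM⟩ := mem_slice_stack.1 hw
    rw [Nat.sub_add_comm hle]
    exact hup _ _ (mem_upShadow.2 ⟨hlt, w, hwM, k, hk⟩)
  · rw [hj, Nat.add_sub_add_right]
    exact hsucc _ _ (mem_slice_stack.1 hw).2

end Stack

section HomogeneousIdeals

theorem mem_colon_singleton_iff {R : Type*} [CommSemiring R] {I : Ideal R} {l x : R} :
    x ∈ I.colon {l} ↔ l * x ∈ I := by
  rw [Submodule.mem_colon_singleton, smul_eq_mul, mul_comm]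

theorem mem_sup_span_singleton_iff {R : Type*} [CommRing R] {I : Ideal R} {l x : R} :
    x ∈ I ⊔ Ideal.span {l} ↔ ∃ v, x - l * v ∈ I := by
  rw [sup_comm, Ideal.mem_span_singleton_sup]
  constructor
  · rintro ⟨v, b, hb, rfl⟩
    exact ⟨v, by rwa [mul_comm l, add_sub_cancel_left]⟩
  · rintro ⟨v, hv⟩
    exact ⟨v, _, hv, by rw [mul_comm v, add_sub_cancel]⟩

attribute [local instance] MvPolynomial.gradedAlgebra

section

variable {σ R : Type*} [CommSemiring R] {l : MvPolynomial σ R} {d e : ℕ}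

theorem homogeneousComponent_add_mul (hl : l.IsHomogeneous e) (v : MvPolynomial σ R) (d : ℕ) :
    homogeneousComponent (d + e) (l * v) = l * homogeneousComponent d v := by
  rw [add_comm d, ← decomposition.decompose'_apply, ← decomposition.decompose'_apply]
  exact DirectSum.coe_decompose_mul_add_of_left_mem (homogeneousSubmodule σ R) hl

theorem homogeneousComponent_mul_of_lt (hl : l.IsHomogeneous e) (v : MvPolynomial σ R)
    (hd : d < e) : homogeneousComponent d (l * v) = 0 := by
  rw [← decomposition.decompose'_apply]
  exact DirectSum.coe_decompose_mul_of_left_mem_of_not_le (homogeneousSubmodule σ R) hl hd.not_ge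

end

variable {K : Type} [Field K] {n : ℕ} {I J : Ideal (MvPolynomial (Fin n) K)}
  {l x : MvPolynomial (Fin n) K} {d e : ℕ}

theorem isHomog_iff_isHomogeneous :
    IsHomog I ↔ I.IsHomogeneous (homogeneousSubmodule (Fin n) K) :=
  ⟨fun hI i p hp => by
    have h := hI p hp i
    rwa [← decomposition.decompose'_apply] at h,
  fun hI _ hp d => homogeneousComponent_mem_of_mem hI hp d⟩

theorem isHomog_bot : IsHomog (⊥ : Ideal (MvPolynomial (Fin n) K)) :=
  isHomog_iff_isHomogeneous.2 (Ideal.IsHomogeneous.bot _)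

theorem _root_.IsHomog.sup (hI : IsHomog I) (hJ : IsHomog J) : IsHomog (I ⊔ J) :=
  isHomog_iff_isHomogeneous.2
    ((isHomog_iff_isHomogeneous.1 hI).sup (isHomog_iff_isHomogeneous.1 hJ))

theorem isHomog_span {s : Set (MvPolynomial (Fin n) K)}
    (hs : ∀ f ∈ s, ∃ e, f.IsHomogeneous e) : IsHomog (Ideal.span s) :=
  isHomog_iff_isHomogeneous.2 (Ideal.homogeneous_span _ s hs)

theorem _root_.IsHomog.sup_span_singleton (hI : IsHomog I) (hl : l.IsHomogeneous e) :
    IsHomog (I ⊔ Ideal.span {l}) :=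
  hI.sup (isHomog_span fun _ hf => ⟨e, Set.mem_singleton_iff.1 hf ▸ hl⟩)

theorem _root_.IsHomog.colon (hI : IsHomog I) (hJ : IsHomog J) : IsHomog (I.colon (J : Set _)) := by
  intro v hv k
  rw [Submodule.mem_colon] at hv ⊢
  intro u hu
  rw [← sum_homogeneousComponent u, smul_eq_mul, Finset.mul_sum]
  refine Ideal.sum_mem _ fun j _ => ?_
  rw [mul_comm, ← homogeneousComponent_add_mul (homogeneousComponent_isHomogeneous j u), mul_comm]
  exact hI _ (hv _ (hJ _ hu _)) _

theorem _root_.IsHomog.colon_singleton (hI : IsHomog I) (hl : l.IsHomogeneous e) :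
    IsHomog (I.colon {l}) := by
  intro v hv d
  rw [mem_colon_singleton_iff] at hv ⊢
  rw [← homogeneousComponent_add_mul hl]
  exact hI _ hv _

theorem _root_.IsHomog.exists_isHomogeneous_sub_mul_mem (hI : IsHomog I) (hl : l.IsHomogeneous e)
    (hx : x.IsHomogeneous (d + e)) (h : x ∈ I ⊔ Ideal.span {l}) :
    ∃ v, v.IsHomogeneous d ∧ x - l * v ∈ I := by
  obtain ⟨v, hv⟩ := mem_sup_span_singleton_iff.1 h
  refine ⟨homogeneousComponent d v, homogeneousComponent_isHomogeneous _ _, ?_⟩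
  rw [← homogeneousComponent_add_mul hl, ← homogeneousComponent_eq_self hx, ← map_sub]
  exact hI _ hv _

theorem _root_.IsHomog.mem_of_mem_sup_span_of_lt (hI : IsHomog I) (hl : l.IsHomogeneous e)
    (hx : x.IsHomogeneous d) (hd : d < e) (h : x ∈ I ⊔ Ideal.span {l}) : x ∈ I := by
  obtain ⟨v, hv⟩ := mem_sup_span_singleton_iff.1 h
  simpa only [map_sub, homogeneousComponent_eq_self hx, homogeneousComponent_mul_of_lt hl v hd,
    sub_zero] using hI _ hv d

end HomogeneousIdeals

section HilbertFunction

variable {K : Type} [Field K] {n : ℕ} {I J : Ideal (MvPolynomial (Fin n) K)}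
  {l x : MvPolynomial (Fin n) K} {d e : ℕ}

/-- The degree-`d` piece of a homogeneous ideal, whose dimension is `hilb I d`. -/
noncomputable abbrev gradedPiece (I : Ideal (MvPolynomial (Fin n) K)) (d : ℕ) :
    Submodule K (MvPolynomial (Fin n) K) :=
  Submodule.restrictScalars K I ⊓ homogeneousSubmodule (Fin n) K d

instance : FiniteDimensional K (gradedPiece I d) :=
  have : FiniteDimensional K (homogeneousSubmodule (Fin n) K d) :=
    Module.Finite.iff_fg.2 (homogeneousSubmodule_fg _ _ d)
  Submodule.finiteDimensional_of_le inf_le_right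

theorem gradedPiece_mono (h : I ≤ J) (d : ℕ) : gradedPiece I d ≤ gradedPiece J d :=
  fun _ hu => ⟨h hu.1, hu.2⟩

theorem hilb_mono (h : I ≤ J) (d : ℕ) : hilb I d ≤ hilb J d :=
  Submodule.finrank_mono (gradedPiece_mono h d)

theorem mem_of_hilb_le (h : I ≤ J) (hIJ : hilb J d ≤ hilb I d) (hx : x ∈ J)
    (hxd : x.IsHomogeneous d) : x ∈ I := by
  have hmem : x ∈ gradedPiece J d := ⟨hx, hxd⟩
  rw [← Submodule.eq_of_le_of_finrank_le (gradedPiece_mono h d) hIJ] at hmem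
  exact hmem.1

theorem gradedPiece_sup_span (hI : IsHomog I) (hl : l.IsHomogeneous e) (d : ℕ) :
    gradedPiece (I ⊔ Ideal.span {l}) (d + e) =
      gradedPiece I (d + e) ⊔ (gradedPiece ⊤ d).map (LinearMap.mulLeft K l) := by
  apply le_antisymm
  · rintro x ⟨hx, hxd⟩
    obtain ⟨v, hv, hxv⟩ := hI.exists_isHomogeneous_sub_mul_mem hl hxd hx
    rw [← sub_add_cancel x (l * v)]
    exact Submodule.add_mem_sup ⟨hxv, IsHomogeneous.sub hxd (add_comm e d ▸ hl.mul hv)⟩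
      ⟨v, ⟨trivial, hv⟩, rfl⟩
  · refine sup_le (gradedPiece_mono le_sup_left _) ?_
    rintro _ ⟨v, hv, rfl⟩
    exact ⟨Ideal.mem_sup_right (Ideal.mem_span_singleton.2 (dvd_mul_right l v)),
      add_comm e d ▸ hl.mul hv.2⟩

theorem gradedPiece_inf_map_mulLeft (hl : l.IsHomogeneous e) (d : ℕ) :
    gradedPiece I (d + e) ⊓ (gradedPiece ⊤ d).map (LinearMap.mulLeft K l) =
      (gradedPiece (I.colon {l}) d).map (LinearMap.mulLeft K l) := by
  apply le_antisymm
  · rintro _ ⟨hx, v, hv, rfl⟩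
    exact ⟨v, ⟨mem_colon_singleton_iff.2 hx.1, hv.2⟩, rfl⟩
  · rintro _ ⟨v, hv, rfl⟩
    exact ⟨⟨mem_colon_singleton_iff.1 hv.1, add_comm e d ▸ hl.mul hv.2⟩, v, ⟨trivial, hv.2⟩, rfl⟩

theorem hilb_sup_span_add_hilb_colon (hI : IsHomog I) (hl : l.IsHomogeneous e) (hl0 : l ≠ 0)
    (d : ℕ) :
    hilb (I ⊔ Ideal.span {l}) (d + e) + hilb (I.colon {l}) d =
      hilb I (d + e) + hilb (⊤ : Ideal (MvPolynomial (Fin n) K)) d := by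
  have hinj : Function.Injective (LinearMap.mulLeft K l) := mul_right_injective₀ hl0
  have h := Submodule.finrank_sup_add_finrank_inf_eq (gradedPiece I (d + e))
    ((gradedPiece ⊤ d).map (LinearMap.mulLeft K l))
  rwa [← gradedPiece_sup_span hI hl, gradedPiece_inf_map_mulLeft hl,
    ← (Submodule.equivMapOfInjective _ hinj _).finrank_eq,
    ← (Submodule.equivMapOfInjective _ hinj _).finrank_eq] at h

theorem hilb_sup_span_of_lt (hI : IsHomog I) (hl : l.IsHomogeneous e) (hd : d < e) :
    hilb (I ⊔ Ideal.span {l}) d = hilb I d :=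
  le_antisymm (Submodule.finrank_mono fun _ hx =>
    ⟨hI.mem_of_mem_sup_span_of_lt hl hx.2 hd hx.1, hx.2⟩) (hilb_mono le_sup_left d)

end HilbertFunction

section Duality

section
variable {K V W : Type*} [Field K] [AddCommGroup V] [Module K V] [AddCommGroup W] [Module K W]

theorem exists_dual_eq_zero_iff_mem {p q : Submodule K V} [FiniteDimensional K q] (hpq : p ≤ q)
    (h : Module.finrank K q = Module.finrank K p + 1) :
    ∃ θ : V →ₗ[K] K, ∀ x ∈ q, θ x = 0 ↔ x ∈ p := by
  obtain ⟨w, hwq, hwp⟩ : ∃ w ∈ q, w ∉ p := by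
    refine Set.not_subset.1 fun hqp => ?_
    rw [hpq.antisymm hqp] at h
    omega
  obtain ⟨θ, hθw, hθ⟩ := Submodule.exists_le_ker_of_notMem hwp
  have hlt : LinearMap.ker θ ⊓ q < q :=
    inf_le_right.lt_of_ne fun heq => hθw (heq.ge hwq).1
  have hp : p = LinearMap.ker θ ⊓ q := Submodule.eq_of_le_of_finrank_le (le_inf hθ hpq)
    (Nat.lt_succ_iff.1 (h.subst (Submodule.finrank_lt_finrank_of_lt hlt)))
  exact ⟨θ, fun x hx => ⟨fun h0 => hp.ge ⟨h0, hx⟩, fun hxp => hθ hxp⟩⟩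

theorem finrank_add_finrank_ker_flip [FiniteDimensional K V] [FiniteDimensional K W]
    (β : V →ₗ[K] W →ₗ[K] K) :
    Module.finrank K V + Module.finrank K (LinearMap.ker β.flip) =
      Module.finrank K W + Module.finrank K (LinearMap.ker β) := by
  have h₁ := LinearMap.finrank_range_add_finrank_ker β
  have h₂ : Module.finrank K (LinearMap.range β) + Module.finrank K (LinearMap.ker β.flip) =
      Module.finrank K W := by
    rw [← LinearMap.dualCoannihilator_range_eq_ker_flip]
    exact Subspace.finrank_add_finrank_dualCoannihilator_eq (LinearMap.range β)
  omega

theorem finrank_eq_of_forall_mem_iff {p q : Submodule K V} (hpq : p ≤ q) {s : Submodule K q}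
    (h : ∀ x : q, x ∈ s ↔ x.1 ∈ p) : Module.finrank K s = Module.finrank K p := by
  have hs : s = p.submoduleOf q := by
    ext x
    exact h x
  rw [hs, (Submodule.submoduleOfEquivOfLe hpq).finrank_eq]

end

variable {K : Type} [Field K] {n r : ℕ} {b I : Ideal (MvPolynomial (Fin n) K)} {a : Fin r → ℕ}
  {u v : MvPolynomial (Fin n) K} {d t : ℕ}

/-- `b` looks like a complete intersection of degrees `a 0, ..., a (r - 1)`: the Hilbert function
of `S / b` counts the exponent vectors in the box `∏ [0, a i)`, and the socle of `S / b` vanishes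
below the top degree `∑ (a i - 1)`. This is what the linkage duality `I ↦ b : I` needs. -/
structure IsGorensteinOfType (b : Ideal (MvPolynomial (Fin n) K)) (a : Fin r → ℕ) : Prop where
  isHomog : IsHomog b
  hilb_add_card_level : ∀ d,
    hilb b d + (level a d).card = hilb (⊤ : Ideal (MvPolynomial (Fin n) K)) d
  mem_of_X_mul_mem : ∀ u d, u.IsHomogeneous d → d < ∑ i, (a i - 1) → (∀ i, X i * u ∈ b) → u ∈ b

namespace IsGorensteinOfType

theorem mem_of_sum_lt (G : IsGorensteinOfType b a) (hu : u.IsHomogeneous d)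
    (hd : ∑ i, (a i - 1) < d) : u ∈ b := by
  have h := G.hilb_add_card_level d
  rw [level_eq_empty hd, Finset.card_empty, add_zero] at h
  exact mem_of_hilb_le le_top h.ge trivial hu

theorem mem_of_forall_mul_mem (G : IsGorensteinOfType b a) (hu : u.IsHomogeneous d)
    (hdt : d + t = ∑ i, (a i - 1))
    (h : ∀ v : MvPolynomial (Fin n) K, v.IsHomogeneous t → u * v ∈ b) : u ∈ b := by
  induction t generalizing d u with
  | zero => simpa only [mul_one] using h 1 (isHomogeneous_one _ _)
  | succ t ih =>
    refine G.mem_of_X_mul_mem u d hu (by omega) fun i =>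
      ih (add_comm 1 d ▸ (isHomogeneous_X K i).mul hu) (by omega) fun v hv => ?_
    rw [mul_right_comm, mul_comm]
    exact h (X i * v) (add_comm 1 t ▸ (isHomogeneous_X K i).mul hv)

theorem mem_colon_iff (G : IsGorensteinOfType b a) (hI : IsHomog I) (hv : v.IsHomogeneous t)
    (hdt : d + t = ∑ i, (a i - 1)) :
    v ∈ b.colon (I : Set _) ↔ ∀ u ∈ I, u.IsHomogeneous d → u * v ∈ b := by
  rw [Submodule.mem_colon]
  refine ⟨fun h u hu _ => mul_comm v u ▸ h u hu, fun h u hu => ?_⟩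
  rw [smul_eq_mul, mul_comm, ← sum_homogeneousComponent u, Finset.sum_mul]
  refine Ideal.sum_mem _ fun k _ => ?_
  have hk := homogeneousComponent_isHomogeneous k u
  rcases lt_or_ge d k with hdk | hkd
  · exact G.mem_of_sum_lt (hk.mul hv) (by omega)
  · refine G.mem_of_forall_mul_mem (t := d - k) (hk.mul hv) (by omega) fun z hz => ?_
    rw [mul_right_comm]
    exact h _ (I.mul_mem_right _ (hI u hu k)) (Nat.add_sub_cancel' hkd ▸ hk.mul hz)

theorem exists_dual (G : IsGorensteinOfType b a) (ha : ∀ i, 1 ≤ a i) :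
    ∃ θ : MvPolynomial (Fin n) K →ₗ[K] K,
      ∀ x, x.IsHomogeneous (∑ i, (a i - 1)) → (θ x = 0 ↔ x ∈ b) := by
  have htop := G.hilb_add_card_level (∑ i, (a i - 1))
  rw [card_level_sum ha] at htop
  obtain ⟨θ, hθ⟩ := exists_dual_eq_zero_iff_mem (gradedPiece_mono le_top _) htop.symm
  exact ⟨θ, fun x hx => (hθ x ⟨trivial, hx⟩).trans (and_iff_left hx)⟩

theorem hilb_colon_add_hilb (G : IsGorensteinOfType b a) (ha : ∀ i, 1 ≤ a i) (hI : IsHomog I)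
    (hbI : b ≤ I) (hdt : d + t = ∑ i, (a i - 1)) :
    hilb (b.colon (I : Set _)) t + hilb I d =
      hilb (⊤ : Ideal (MvPolynomial (Fin n) K)) t + hilb b d := by
  obtain ⟨θ, hθ⟩ := G.exists_dual ha
  let β : gradedPiece I d →ₗ[K] gradedPiece (⊤ : Ideal (MvPolynomial (Fin n) K)) t →ₗ[K] K :=
    ((LinearMap.mul K (MvPolynomial (Fin n) K)).compr₂ θ).domRestrict₁₂ _ _
  have hβ (u v) : β u v = 0 ↔ u.1 * v.1 ∈ b := hθ _ (hdt ▸ u.2.2.mul v.2.2)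
  have hker : Module.finrank K (LinearMap.ker β) = hilb b d := by
    refine finrank_eq_of_forall_mem_iff (gradedPiece_mono hbI d) fun u => ?_
    rw [LinearMap.mem_ker, LinearMap.ext_iff]
    refine ⟨fun h => ⟨?_, u.2.2⟩, fun h v => (hβ u v).2 (b.mul_mem_right _ h.1)⟩
    exact G.mem_of_forall_mul_mem u.2.2 hdt fun v hv => (hβ u ⟨v, trivial, hv⟩).1 (h _)
  have hflip : Module.finrank K (LinearMap.ker β.flip) = hilb (b.colon (I : Set _)) t := by
    refine finrank_eq_of_forall_mem_iff (gradedPiece_mono le_top t) fun v => ?_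
    rw [LinearMap.mem_ker, LinearMap.ext_iff]
    refine Iff.trans ?_ ((G.mem_colon_iff hI v.2.2 hdt).symm.trans (and_iff_left v.2.2).symm)
    exact ⟨fun h u hu hud => (hβ ⟨u, hu, hud⟩ v).1 (h _),
      fun h u => (hβ u v).2 (h _ u.2.1 u.2.2)⟩
  have h := finrank_add_finrank_ker_flip β
  rw [hker, hflip] at h
  rwa [add_comm (hilb _ t)]

end IsGorensteinOfType

end Duality

section RegularElements

variable {R : Type*} [CommRing R] {I : Ideal R} {f l x : R}

theorem mem_of_mul_mem_of_isSMulRegular (hl : IsSMulRegular (R ⧸ I) l) (h : l * x ∈ I) : x ∈ I :=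
  mem_of_isSMulRegular_quotient_of_smul_mem hl h

theorem colon_singleton_eq_self (hl : IsSMulRegular (R ⧸ I) l) : I.colon {l} = I :=
  le_antisymm (fun _ hx => mem_of_mul_mem_of_isSMulRegular hl (mem_colon_singleton_iff.1 hx))
    Ideal.le_colon

theorem colon_singleton_pow_zero : I.colon {l ^ 0} = I :=
  colon_singleton_eq_self (pow_zero l ▸ .one _)

theorem colon_colon_singleton_pow (j : ℕ) :
    (I.colon {l}).colon {l ^ j} = I.colon {l ^ (j + 1)} := by
  ext x
  rw [mem_colon_singleton_iff, mem_colon_singleton_iff, mem_colon_singleton_iff, pow_succ',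
    mul_assoc]

theorem isSMulRegular_quotient_sup_span (hf : IsSMulRegular (R ⧸ I) f)
    (hl : IsSMulRegular (R ⧸ I ⊔ Ideal.span {f}) l) :
    IsSMulRegular (R ⧸ I ⊔ Ideal.span {l}) f := by
  refine (isSMulRegular_quotient_iff_mem_of_smul_mem _ _).2 fun u hu => ?_
  obtain ⟨v, hv⟩ := mem_sup_span_singleton_iff.1 hu
  have hlv : l * v ∈ I ⊔ Ideal.span {f} :=
    mem_sup_span_singleton_iff.2 ⟨u, by rw [← neg_sub]; exact I.neg_mem hv⟩
  obtain ⟨w, hw⟩ := mem_sup_span_singleton_iff.1 (mem_of_mul_mem_of_isSMulRegular hl hlv)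
  have hfu : f * (u - l * w) = (f * u - l * v) + l * (v - f * w) := by ring
  exact mem_sup_span_singleton_iff.2 ⟨w, mem_of_mul_mem_of_isSMulRegular hf
    (hfu ▸ I.add_mem hv (I.mul_mem_left l hw))⟩

end RegularElements

section HyperplaneSections

variable {K : Type} [Field K] {n r : ℕ} {E I : Ideal (MvPolynomial (Fin n) K)}
  {f l u : MvPolynomial (Fin n) K} {a : Fin (r + 1) → ℕ} {i : Fin (r + 1)} {d e : ℕ}

theorem sum_sub_one_eq_add_sum_removeNth (i : Fin (r + 1)) :
    ∑ j, (a j - 1) = (a i - 1) + ∑ j, (i.removeNth a j - 1) :=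
  Fin.sum_univ_succAbove _ i

theorem mem_idealOfVars_of_isHomogeneous {σ R : Type*} [CommSemiring R] {f : MvPolynomial σ R}
    (hf : f.IsHomogeneous e) (he : 0 < e) : f ∈ idealOfVars σ R := by
  rw [← pow_one (idealOfVars σ R), mem_pow_idealOfVars_iff']
  refine fun x hx => hf.coeff_eq_zero ?_
  omega

theorem hilb_sup_span_add_hilb (hE : IsHomog E) (hf : f.IsHomogeneous e)
    (hfE : IsSMulRegular (MvPolynomial (Fin n) K ⧸ E) f) (d : ℕ) :
    hilb (E ⊔ Ideal.span {f}) (d + e) + hilb E d =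
      hilb E (d + e) + hilb (⊤ : Ideal (MvPolynomial (Fin n) K)) d := by
  rcases eq_or_ne f 0 with rfl | hf0
  · have hE' : E = ⊤ := by rw [← colon_singleton_eq_self hfE, Submodule.colon_singleton_zero]
    rw [hE', top_sup_eq]
  · simpa only [colon_singleton_eq_self hfE] using hilb_sup_span_add_hilb_colon hE hf hf0 d

theorem hilb_add_sum_hilb_top (hI : IsHomog I) (hl : l.IsHomogeneous 1) (hl0 : l ≠ 0) (d : ℕ) :
    hilb I d + ∑ j ∈ Finset.range d, hilb (⊤ : Ideal (MvPolynomial (Fin n) K)) j =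
      ∑ j ∈ Finset.range (d + 1), hilb (I.colon {l ^ j} ⊔ Ideal.span {l}) (d - j) := by
  induction d generalizing I with
  | zero =>
    rw [Finset.sum_range_zero, Finset.sum_range_one, colon_singleton_pow_zero]
    exact (hilb_sup_span_of_lt hI hl zero_lt_one).symm
  | succ d ih =>
    have h₁ := ih (hI.colon_singleton hl)
    have h₂ := hilb_sup_span_add_hilb_colon hI hl hl0 d
    simp only [colon_colon_singleton_pow] at h₁
    rw [Finset.sum_range_succ, Finset.sum_range_succ' _ (d + 1), colon_singleton_pow_zero]
    simp only [Nat.add_sub_add_right, Nat.sub_zero]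
    omega

theorem hilb_add_sum_card_level {a' : Fin r → ℕ} (hE : IsHomog E) (hl : l.IsHomogeneous 1)
    (hl0 : l ≠ 0) (hlE : IsSMulRegular (MvPolynomial (Fin n) K ⧸ E) l)
    (G : IsGorensteinOfType (E ⊔ Ideal.span {l}) a') (d : ℕ) :
    hilb E d + ∑ j ∈ Finset.range (d + 1), (level a' (d - j)).card =
      hilb (⊤ : Ideal (MvPolynomial (Fin n) K)) d := by
  have h := hilb_add_sum_hilb_top hE hl hl0 d
  simp only [colon_singleton_eq_self (hlE.pow _)] at h
  have hsum := Finset.sum_congr rfl fun j (_ : j ∈ Finset.range (d + 1)) =>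
    G.hilb_add_card_level (d - j)
  have hreflect := Finset.sum_range_reflect (hilb (⊤ : Ideal (MvPolynomial (Fin n) K))) (d + 1)
  rw [Finset.sum_range_succ (hilb _), Nat.add_sub_cancel] at hreflect
  rw [Finset.sum_add_distrib, ← h, hreflect] at hsum
  omega

theorem IsGorensteinOfType.mem_of_X_mul_mem_sup_span (hE : IsHomog E) (hl : l.IsHomogeneous 1)
    (hlE : IsSMulRegular (MvPolynomial (Fin n) K ⧸ E) l)
    (hf : f.IsHomogeneous (a i)) (hfE : IsSMulRegular (MvPolynomial (Fin n) K ⧸ E) f)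
    (hai : 1 ≤ a i) (G : IsGorensteinOfType (E ⊔ Ideal.span {l}) (i.removeNth a))
    (hu : u.IsHomogeneous d) (hd : d < ∑ j, (a j - 1)) (hX : ∀ k, X k * u ∈ E ⊔ Ideal.span {f}) :
    u ∈ E ⊔ Ideal.span {f} := by
  have hcolon : idealOfVars (Fin n) K ≤ (E ⊔ Ideal.span {f}).colon {u} := by
    refine Ideal.span_le.2 (Set.range_subset_iff.2 fun k => ?_)
    exact mem_colon_singleton_iff.2 (mul_comm u (X k) ▸ hX k)
  have hlu : l * u ∈ E ⊔ Ideal.span {f} :=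
    Submodule.mem_colon_singleton.1 (hcolon (mem_idealOfVars_of_isHomogeneous hl one_pos))
  have hlud : (l * u).IsHomogeneous (d + 1) := add_comm 1 d ▸ hl.mul hu
  rcases lt_or_ge (d + 1) (a i) with hda | hda
  · exact Ideal.mem_sup_left (mem_of_mul_mem_of_isSMulRegular hlE
      (hE.mem_of_mem_sup_span_of_lt hf hlud hda hlu))
  obtain ⟨d', hd'⟩ := Nat.exists_eq_add_of_le' hda
  obtain ⟨v, hv, hluv⟩ := hE.exists_isHomogeneous_sub_mul_mem hf (hd' ▸ hlud) hlu
  have hXv (k : Fin n) : X k * v ∈ E ⊔ Ideal.span {l} := by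
    obtain ⟨w, hw⟩ := mem_sup_span_singleton_iff.1 (hX k)
    refine mem_sup_span_singleton_iff.2 ⟨w, mem_of_mul_mem_of_isSMulRegular hfE ?_⟩
    have hfXv : f * (X k * v - l * w) = l * (X k * u - f * w) - X k * (l * u - f * v) := by ring
    exact hfXv ▸ E.sub_mem (E.mul_mem_left _ hw) (E.mul_mem_left _ hluv)
  have hd'lt : d' < ∑ j, (i.removeNth a j - 1) := by
    rw [sum_sub_one_eq_add_sum_removeNth i] at hd
    omega
  obtain ⟨w, hw⟩ := mem_sup_span_singleton_iff.1 (G.mem_of_X_mul_mem v d' hv hd'lt hXv)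
  refine mem_sup_span_singleton_iff.2 ⟨w, mem_of_mul_mem_of_isSMulRegular hlE ?_⟩
  have hluw : l * (u - f * w) = (l * u - f * v) + f * (v - l * w) := by ring
  exact hluw ▸ E.add_mem hluv (E.mul_mem_left _ hw)

theorem IsGorensteinOfType.sup_span (hE : IsHomog E) (hl : l.IsHomogeneous 1) (hl0 : l ≠ 0)
    (hlE : IsSMulRegular (MvPolynomial (Fin n) K ⧸ E) l) (hf : f.IsHomogeneous (a i))
    (hfE : IsSMulRegular (MvPolynomial (Fin n) K ⧸ E) f) (hai : 1 ≤ a i)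
    (G : IsGorensteinOfType (E ⊔ Ideal.span {l}) (i.removeNth a)) :
    IsGorensteinOfType (E ⊔ Ideal.span {f}) a where
  isHomog := hE.sup_span_singleton hf
  hilb_add_card_level d := by
    rcases lt_or_ge d (a i) with hd | hd
    · rw [hilb_sup_span_of_lt hE hf hd, card_level_of_lt hd]
      exact hilb_add_sum_card_level hE hl hl0 hlE G d
    · obtain ⟨d, rfl⟩ := Nat.exists_eq_add_of_le' hd
      have h₁ := hilb_sup_span_add_hilb hE hf hfE d
      have h₂ := card_level_add_sum (a := a) (i := i) (d := d)
      have h₃ := hilb_add_sum_card_level hE hl hl0 hlE G d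
      have h₄ := hilb_add_sum_card_level hE hl hl0 hlE G (d + a i)
      omega
  mem_of_X_mul_mem _ _ hu hd hX := G.mem_of_X_mul_mem_sup_span hE hl hlE hf hfE hai hu hd hX

end HyperplaneSections

section Macaulay

variable {K : Type} [Field K] {n r : ℕ} {b I J : Ideal (MvPolynomial (Fin n) K)} {a : Fin r → ℕ}
  {d t : ℕ}

/-- The lex segment of the box of side lengths `a` that has as many elements as `I / b` has
dimensions in degree `d`. These are the exponents of the monomials that the lex-plus-powers ideal
attached to `I` has in degree `d` besides those divisible by a power `X i ^ a i`. -/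
noncomputable def hilbSegment (a : Fin r → ℕ) (b I : Ideal (MvPolynomial (Fin n) K)) (d : ℕ) :
    Finset (Fin r → ℕ) :=
  lexSegment a d (hilb I d - hilb b d)

/-- `b` is Gorenstein of type `a`, and the Hilbert functions of the homogeneous ideals containing
`b` satisfy Macaulay's growth bound in the form it takes for the monomial complete intersection
`(X i ^ a i)`. -/
structure IsMacaulayOfType (b : Ideal (MvPolynomial (Fin n) K)) (a : Fin r → ℕ) : Prop
    extends IsGorensteinOfType b a where
  card_upShadow_hilbSegment_le : ∀ I, IsHomog I → b ≤ I → ∀ d,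
    (upShadow a (hilbSegment a b I d)).card + hilb b (d + 1) ≤ hilb I (d + 1)

theorem hilbSegment_subset_level : hilbSegment a b I d ⊆ level a d :=
  lexSegment_subset_level _

theorem upShadow_hilbSegment_eq_empty (hd : ∑ i, (a i - 1) < d + 1) :
    upShadow a (hilbSegment a b I d) = ∅ := by
  rw [← Finset.subset_empty, ← level_eq_empty hd]
  exact upShadow_subset_level hilbSegment_subset_level

theorem hilbSegment_mono (h : I ≤ J) (d : ℕ) : hilbSegment a b I d ⊆ hilbSegment a b J d :=
  lexSegment_mono (Nat.sub_le_sub_right (hilb_mono h d) _)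

theorem IsGorensteinOfType.card_hilbSegment_add_hilb (G : IsGorensteinOfType b a) (hbI : b ≤ I)
    (d : ℕ) : (hilbSegment a b I d).card + hilb b d = hilb I d := by
  have h₁ := G.hilb_add_card_level d
  have h₂ := hilb_mono hbI d
  have h₃ := hilb_mono (le_top : I ≤ ⊤) d
  rw [hilbSegment, card_lexSegment (by omega)]
  omega

theorem IsMacaulayOfType.upShadow_hilbSegment_subset (G : IsMacaulayOfType b a) (hI : IsHomog I)
    (hbI : b ≤ I) (d : ℕ) : upShadow a (hilbSegment a b I d) ⊆ hilbSegment a b I (d + 1) := by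
  refine (isLexSegment_lexSegment _).upShadow.subset_of_card_le (isLexSegment_lexSegment _) ?_
  have h₁ := G.card_upShadow_hilbSegment_le I hI hbI d
  have h₂ := G.card_hilbSegment_add_hilb hbI (d + 1)
  exact Nat.le_of_add_le_add_right (h₁.trans h₂.ge)

theorem IsGorensteinOfType.card_upShadow_hilbSegment_le_of_colon (G : IsGorensteinOfType b a)
    (ha : ∀ i, 1 ≤ a i) (hI : IsHomog I) (hbI : b ≤ I) (hdt : d + 1 + t = ∑ i, (a i - 1))
    (h : (upShadow a (hilbSegment a b (b.colon (I : Set _)) t)).card + hilb b (t + 1) ≤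
      hilb (b.colon (I : Set _)) (t + 1)) :
    (upShadow a (hilbSegment a b I d)).card + hilb b (d + 1) ≤ hilb I (d + 1) := by
  have hd₁ := G.hilb_colon_add_hilb ha hI hbI hdt
  have ht₁ := G.hilb_colon_add_hilb ha hI hbI (d := d) (t := t + 1) (by omega)
  have := hilb_mono hbI d
  have := hilb_mono hbI (d + 1)
  have := hilb_mono (le_top : I ≤ ⊤) (d + 1)
  have := card_level_eq_of_add_eq hdt
  have := card_level_eq_of_add_eq (a := a) (d := d) (t := t + 1) (by omega)
  have := G.hilb_add_card_level (d + 1)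
  have := G.hilb_add_card_level d
  have := G.hilb_add_card_level t
  have := G.hilb_add_card_level (t + 1)
  have hcompl : hilb (b.colon (I : Set _)) t - hilb b t =
      (level a (d + 1)).card - (hilb I (d + 1) - hilb b (d + 1)) := by omega
  have hup := card_upShadow_lexSegment_le_of_compl (a := a) (c := hilb I d - hilb b d)
    (b := hilb I (d + 1) - hilb b (d + 1)) hdt (by omega) (by omega)
    (by rw [hilbSegment, hcompl] at h; omega)
  rw [hilbSegment]
  omega

end Macaulay

section MacaulayStep

variable {K : Type} [Field K] {n r : ℕ} {E I : Ideal (MvPolynomial (Fin n) K)}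
  {f l : MvPolynomial (Fin n) K} {a : Fin (r + 1) → ℕ} {i : Fin (r + 1)} {d : ℕ}

/-- The box set whose slices along the pivot coordinate are the lex segments of the ideals
`(I : l ^ j) + (l)`; by iterating the colon with `l` it has the Hilbert function of `I / E` in
degrees below the side length `a i`. -/
noncomputable def colonStack (a : Fin (r + 1) → ℕ) (i : Fin (r + 1))
    (E I : Ideal (MvPolynomial (Fin n) K)) (l : MvPolynomial (Fin n) K) (d : ℕ) :
    Finset (Fin (r + 1) → ℕ) :=
  stack a i (fun e j => hilbSegment (i.removeNth a) (E ⊔ Ideal.span {l})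
    (I.colon {l ^ j} ⊔ Ideal.span {l}) e) d

theorem sup_span_le_colon_pow_sup_span (hEI : E ≤ I) (j : ℕ) :
    E ⊔ Ideal.span {l} ≤ I.colon {l ^ j} ⊔ Ideal.span {l} :=
  sup_le_sup_right (hEI.trans Ideal.le_colon) _

theorem colon_pow_le_colon_pow_succ (j : ℕ) : I.colon {l ^ j} ≤ I.colon {l ^ (j + 1)} := by
  intro x hx
  rw [mem_colon_singleton_iff] at hx ⊢
  rw [pow_succ', mul_assoc]
  exact I.mul_mem_left l hx

theorem card_colonStack_add_hilb (hE : IsHomog E) (hl : l.IsHomogeneous 1) (hl0 : l ≠ 0)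
    (hlE : IsSMulRegular (MvPolynomial (Fin n) K ⧸ E) l)
    (G : IsGorensteinOfType (E ⊔ Ideal.span {l}) (i.removeNth a)) (hI : IsHomog I) (hEI : E ≤ I)
    (hd : d < a i) : (colonStack a i E I l d).card + hilb E d = hilb I d := by
  have hEsum := hilb_add_sum_hilb_top hE hl hl0 d
  have hIsum := hilb_add_sum_hilb_top hI hl hl0 d
  have hcard := Finset.sum_congr rfl fun j (_ : j ∈ Finset.range (d + 1)) =>
    G.card_hilbSegment_add_hilb (sup_span_le_colon_pow_sup_span hEI j) (d - j)
  simp only [colon_singleton_eq_self (hlE.pow _)] at hEsum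
  rw [Finset.sum_add_distrib, ← hIsum, ← hEsum] at hcard
  rw [colonStack, card_stack (fun _ _ => hilbSegment_subset_level) hd]
  omega

theorem upShadow_colonStack_subset (hl : l.IsHomogeneous 1)
    (G : IsMacaulayOfType (E ⊔ Ideal.span {l}) (i.removeNth a)) (hI : IsHomog I) (hEI : E ≤ I) :
    upShadow a (colonStack a i E I l d) ⊆ colonStack a i E I l (d + 1) :=
  upShadow_stack_subset
    (fun e j => G.upShadow_hilbSegment_subset
      ((hI.colon_singleton (hl.pow j)).sup_span_singleton hl)
      (sup_span_le_colon_pow_sup_span hEI j) e)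
    (fun e j => hilbSegment_mono (sup_le_sup_right (colon_pow_le_colon_pow_succ j) _) e)

theorem IsMacaulayOfType.card_upShadow_hilbSegment_le_of_lt (hmono : Monotone a) (hE : IsHomog E)
    (hl : l.IsHomogeneous 1) (hl0 : l ≠ 0) (hlE : IsSMulRegular (MvPolynomial (Fin n) K ⧸ E) l)
    (G : IsMacaulayOfType (E ⊔ Ideal.span {l}) (i.removeNth a)) (hI : IsHomog I) (hEI : E ≤ I)
    (hd : d + 1 < a i) :
    (upShadow a (hilbSegment a E I d)).card + hilb E (d + 1) ≤ hilb I (d + 1) := by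
  have hcard := card_colonStack_add_hilb hE hl hl0 hlE G.toIsGorensteinOfType hI hEI
    (Nat.lt_of_succ_lt hd)
  have hcard' := card_colonStack_add_hilb hE hl hl0 hlE G.toIsGorensteinOfType hI hEI hd
  have hsegment : hilbSegment a E I d = lexSegment a d (colonStack a i E I l d).card := by
    rw [hilbSegment, ← hcard, Nat.add_sub_cancel]
  rw [← hcard', hsegment]
  refine Nat.add_le_add_right ?_ _
  calc (upShadow a (lexSegment a d (colonStack a i E I l d).card)).card
      ≤ (upShadow a (colonStack a i E I l d)).card :=
        clementsLindstrom hmono d _ stack_subset_level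
    _ ≤ (colonStack a i E I l (d + 1)).card :=
        Finset.card_le_card (upShadow_colonStack_subset hl G hI hEI)

theorem IsMacaulayOfType.sup_span (hmono : Monotone a) (ha : ∀ j, 1 ≤ a j)
    (hgrowth : ∑ j, (i.removeNth a j - 1) < a i) (hE : IsHomog E) (hl : l.IsHomogeneous 1)
    (hl0 : l ≠ 0) (hlE : IsSMulRegular (MvPolynomial (Fin n) K ⧸ E) l) (hf : f.IsHomogeneous (a i))
    (hfE : IsSMulRegular (MvPolynomial (Fin n) K ⧸ E) f)
    (G : IsMacaulayOfType (E ⊔ Ideal.span {l}) (i.removeNth a)) :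
    IsMacaulayOfType (E ⊔ Ideal.span {f}) a where
  toIsGorensteinOfType := .sup_span hE hl hl0 hlE hf hfE (ha i) G.toIsGorensteinOfType
  card_upShadow_hilbSegment_le := by
    have G' : IsGorensteinOfType (E ⊔ Ideal.span {f}) a :=
      .sup_span hE hl hl0 hlE hf hfE (ha i) G.toIsGorensteinOfType
    have hlow (I : Ideal (MvPolynomial (Fin n) K)) (hI : IsHomog I) (hbI : E ⊔ Ideal.span {f} ≤ I)
        (d : ℕ) (hd : d + 1 < a i) : (upShadow a (hilbSegment a (E ⊔ Ideal.span {f}) I d)).card +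
          hilb (E ⊔ Ideal.span {f}) (d + 1) ≤ hilb I (d + 1) := by
      have hEI := le_sup_left.trans hbI
      rw [hilbSegment, hilb_sup_span_of_lt hE hf (Nat.lt_of_succ_lt hd),
        hilb_sup_span_of_lt hE hf hd]
      exact card_upShadow_hilbSegment_le_of_lt hmono hE hl hl0 hlE G hI hEI hd
    intro I hI hbI d
    rcases lt_or_ge (d + 1) (a i) with hd | hd
    · exact hlow I hI hbI d hd
    rcases lt_or_ge (∑ j, (a j - 1)) (d + 1) with hs | hs
    · rw [upShadow_hilbSegment_eq_empty hs, Finset.card_empty, zero_add]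
      exact hilb_mono hbI _
    · obtain ⟨t, ht⟩ := Nat.exists_eq_add_of_le hs
      refine G'.card_upShadow_hilbSegment_le_of_colon ha hI hbI ht.symm
        (hlow _ (G'.isHomog.colon hI) Ideal.le_colon t ?_)
      rw [sum_sub_one_eq_add_sum_removeNth i] at ht
      omega

end MacaulayStep

section LinearForms

variable {K : Type*} [Field K] {n : ℕ}

theorem exists_isHomogeneous_one_isSMulRegular [Infinite K] {ι : Type*} [Finite ι]
    (E : ι → Ideal (MvPolynomial (Fin n) K))
    (hE : ∀ i, ∃ g ∈ idealOfVars (Fin n) K, IsSMulRegular (MvPolynomial (Fin n) K ⧸ E i) g) :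
    ∃ l : MvPolynomial (Fin n) K, l.IsHomogeneous 1 ∧
      ∀ i, IsSMulRegular (MvPolynomial (Fin n) K ⧸ E i) l := by
  have hass (i : ι) (x : MvPolynomial (Fin n) K) :
      (∃ P ∈ associatedPrimes _ (MvPolynomial (Fin n) K ⧸ E i), x ∈ P) ↔
        ¬ IsSMulRegular (MvPolynomial (Fin n) K ⧸ E i) x := by
    simpa only [Set.mem_iUnion₂, exists_prop] using! Set.ext_iff.1
      (biUnion_associatedPrimes_eq_compl_regular (MvPolynomial (Fin n) K)
        (MvPolynomial (Fin n) K ⧸ E i)) x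
  have (i : ι) : Finite (associatedPrimes _ (MvPolynomial (Fin n) K ⧸ E i)) :=
    associatedPrimes.finite (MvPolynomial (Fin n) K) _
  by_contra! hl
  let avoid (p : Σ i, associatedPrimes _ (MvPolynomial (Fin n) K ⧸ E i)) :
      Submodule K (homogeneousSubmodule (Fin n) K 1) :=
    (p.2.1.restrictScalars K).submoduleOf _
  have hcover : ⋃ p, (avoid p : Set (homogeneousSubmodule (Fin n) K 1)) = Set.univ := by
    refine Set.eq_univ_of_forall fun l => ?_
    obtain ⟨i, hi⟩ := hl l.1 l.2
    obtain ⟨P, hP, hlP⟩ := (hass i _).2 hi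
    exact Set.mem_iUnion.2 ⟨⟨i, P, hP⟩, hlP⟩
  obtain ⟨⟨i, P, hP⟩, htop⟩ := Subspace.exists_eq_top_of_iUnion_eq_univ hcover
  obtain ⟨g, hg, hreg⟩ := hE i
  have hX (k : Fin n) : X k ∈ P :=
    htop.ge (Submodule.mem_top (x := ⟨X k, isHomogeneous_X K k⟩))
  exact (hass i g).1 ⟨P, hP, Ideal.span_le.2 (Set.range_subset_iff.2 hX) hg⟩ hreg

end LinearForms

section MonomialIdeals

variable {K : Type} [Field K] {n : ℕ} {b I : Ideal (MvPolynomial (Fin n) K)}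

theorem hilb_eq_ncard {T : Set (Fin n →₀ ℕ)} (hT : ∀ x, x ∈ I ↔ ∀ u ∈ x.support, u ∈ T) (d : ℕ) :
    hilb I d = {u | u ∈ T ∧ u.degree = d}.ncard := by
  have h : gradedPiece I d = restrictSupport K {u | u ∈ T ∧ u.degree = d} := by
    ext x
    rw [mem_restrictSupport_iff, Set.ofPred_and, Set.subset_inter_iff]
    refine and_congr (hT x) (forall_congr' fun u => ?_)
    rw [Finset.mem_coe, mem_support_iff, Set.mem_ofPred_eq, Finsupp.degree_eq_weight_one]
    rfl
  rw [hilb, ← gradedPiece, h, Module.finrank_eq_nat_card_basis (basisRestrictSupport K _)]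
  rfl

theorem hilb_top_eq_ncard (d : ℕ) :
    hilb (⊤ : Ideal (MvPolynomial (Fin n) K)) d = {u : Fin n →₀ ℕ | u.degree = d}.ncard := by
  simpa only [Set.mem_univ, true_and] using hilb_eq_ncard (T := Set.univ)
    (fun x => iff_of_true (Submodule.mem_top (x := x)) fun _ _ => trivial) d

theorem hilb_top_zero : hilb (⊤ : Ideal (MvPolynomial (Fin n) K)) 0 = 1 := by
  simp only [hilb_top_eq_ncard, Finsupp.degree_eq_zero_iff]
  exact Set.ncard_singleton 0

theorem hilb_top_one : hilb (⊤ : Ideal (MvPolynomial (Fin n) K)) 1 = n := by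
  rw [hilb_top_eq_ncard, ← Finsupp.range_single_one, ← Set.image_univ,
    Set.ncard_image_of_injective _ (Finsupp.single_left_injective one_ne_zero), Set.ncard_univ,
    Nat.card_fin]

theorem hilb_idealOfVars_zero : hilb (idealOfVars (Fin n) K) 0 = 0 := by
  have h (x : MvPolynomial (Fin n) K) :
      x ∈ idealOfVars (Fin n) K ↔ ∀ u ∈ x.support, u ∈ {u : Fin n →₀ ℕ | 1 ≤ u.degree} := by
    rw [← pow_one (idealOfVars (Fin n) K)]
    exact mem_pow_idealOfVars_iff 1 x
  have hempty : {u : Fin n →₀ ℕ | u ∈ {u | 1 ≤ u.degree} ∧ u.degree = 0} = ∅ :=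
    Set.eq_empty_of_forall_notMem fun u hu => Nat.one_le_iff_ne_zero.1 hu.1 hu.2
  rw [hilb_eq_ncard h, hempty, Set.ncard_empty]

theorem hilb_zero_eq_zero (hb : b ≤ idealOfVars (Fin n) K) : hilb b 0 = 0 :=
  Nat.eq_zero_of_le_zero (hilb_idealOfVars_zero.subst (hilb_mono hb 0))

theorem ne_top_of_le_idealOfVars (hb : b ≤ idealOfVars (Fin n) K) : b ≠ ⊤ := by
  rintro rfl
  exact absurd (hilb_zero_eq_zero hb) (hilb_top_zero.trans_ne one_ne_zero)

end MonomialIdeals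

section PrefixIdeals

variable {R : Type*} [CommRing R] {r : ℕ}

/-- The ideal `b + (f 0, ..., f (k - 1))`. The base `b` collects the linear forms that the induction
on the length of a regular sequence divides out. -/
def prefixIdeal (b : Ideal R) (f : Fin r → R) (k : ℕ) : Ideal R :=
  b ⊔ Ideal.span (f '' {j | j.1 < k})

variable (b : Ideal R)

theorem prefixIdeal_zero (f : Fin r → R) : prefixIdeal b f 0 = b := by
  simp only [prefixIdeal, not_lt_zero, Set.ofPred_false, Set.image_empty, Ideal.span_empty,
    sup_bot_eq]

theorem prefixIdeal_self (f : Fin r → R) : prefixIdeal b f r = b ⊔ Ideal.span (Set.range f) := by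
  simp only [prefixIdeal, Fin.is_lt, Set.ofPred_true, Set.image_univ]

theorem prefixIdeal_succ (f : Fin r → R) (i : Fin r) :
    prefixIdeal b f (i + 1) = prefixIdeal b f i ⊔ Ideal.span {f i} := by
  have h : {j : Fin r | j.1 < i.1 + 1} = insert i {j | j.1 < i.1} := by
    ext j
    exact Order.lt_add_one_iff.trans Fin.le_def.symm |>.trans le_iff_eq_or_lt
  rw [prefixIdeal, h, Set.image_insert_eq, Ideal.span_insert, sup_comm (Ideal.span {f i}),
    ← sup_assoc]
  rfl

theorem prefixIdeal_init (f : Fin (r + 1) → R) {k : ℕ} (hk : k ≤ r) :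
    prefixIdeal b (Fin.init f) k = prefixIdeal b f k := by
  have h : {j : Fin (r + 1) | j.1 < k} = Fin.castSucc '' {j | j.1 < k} := by
    ext j
    refine ⟨fun hj => ⟨⟨j, hj.trans_le hk⟩, hj, rfl⟩, ?_⟩
    rintro ⟨j, hj, rfl⟩
    exact hj
  rw [prefixIdeal, prefixIdeal, h, Set.image_image]
  rfl

theorem prefixIdeal_sup_span (f : Fin r → R) (l : R) (k : ℕ) :
    prefixIdeal (b ⊔ Ideal.span {l}) f k = prefixIdeal b f k ⊔ Ideal.span {l} :=
  sup_right_comm _ _ _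

end PrefixIdeals

section Induction

theorem monotone_of_sum_lt {r : ℕ} {a : Fin r → ℕ}
    (hgrowth : ∀ j, ∑ i with i < j, (a i - 1) < a j) : Monotone a := by
  intro i j hij
  rcases hij.eq_or_lt with rfl | hij
  · exact le_rfl
  have h := (Finset.single_le_sum_of_canonicallyOrdered (f := fun i => a i - 1)
    (Finset.mem_filter.2 ⟨Finset.mem_univ i, hij⟩)).trans_lt (hgrowth j)
  omega

theorem sum_init_lt {r : ℕ} {a : Fin (r + 1) → ℕ}
    (hgrowth : ∀ j, ∑ i with i < j, (a i - 1) < a j) (j : Fin r) :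
    ∑ i with i < j, (Fin.init a i - 1) < Fin.init a j := by
  have h := hgrowth j.castSucc
  rwa [Finset.sum_filter, Fin.sum_univ_castSucc, if_neg (Fin.castSucc_lt_last j).not_gt, add_zero,
    ← Finset.sum_filter] at h

theorem sum_removeNth_last_lt {r : ℕ} {a : Fin (r + 1) → ℕ}
    (hgrowth : ∀ j, ∑ i with i < j, (a i - 1) < a j) :
    ∑ j, ((Fin.last r).removeNth a j - 1) < a (Fin.last r) := by
  have h := hgrowth (Fin.last r)
  simpa only [Finset.sum_filter, Fin.sum_univ_castSucc, Fin.castSucc_lt_last, if_true,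
    lt_irrefl, if_false, add_zero, Fin.removeNth_last] using! h

variable {K : Type} [Field K] {n r : ℕ} {b : Ideal (MvPolynomial (Fin n) K)}
  {f : Fin r → MvPolynomial (Fin n) K} {a : Fin r → ℕ}

theorem isHomog_prefixIdeal (hb : IsHomog b) (hf : ∀ i, (f i).IsHomogeneous (a i)) (k : ℕ) :
    IsHomog (prefixIdeal b f k) :=
  hb.sup (isHomog_span (Set.forall_mem_image.2 fun i _ => ⟨a i, hf i⟩))

theorem eq_idealOfVars_of_hilb_le (hb : b ≤ idealOfVars (Fin n) K)
    (h : hilb (⊤ : Ideal (MvPolynomial (Fin n) K)) 1 ≤ hilb b 1) : b = idealOfVars (Fin n) K :=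
  hb.antisymm (Ideal.span_le.2 (Set.range_subset_iff.2 fun i =>
    mem_of_hilb_le le_top h trivial (isHomogeneous_X K i)))

theorem isMacaulayOfType_idealOfVars (a : Fin 0 → ℕ) :
    IsMacaulayOfType (idealOfVars (Fin n) K) a where
  isHomog := isHomog_span (Set.forall_mem_range.2 fun i => ⟨1, isHomogeneous_X K i⟩)
  hilb_add_card_level d := by
    rcases d.eq_zero_or_pos with rfl | hd
    · rw [hilb_idealOfVars_zero, level_zero finZeroElim, hilb_top_zero, Finset.card_singleton]
    · rw [level_eq_empty (by rwa [Fin.sum_univ_zero]), Finset.card_empty, add_zero]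
      exact le_antisymm (hilb_mono le_top d) (Submodule.finrank_mono fun x hx =>
        ⟨mem_idealOfVars_of_isHomogeneous hx.2 hd, hx.2⟩)
  mem_of_X_mul_mem u d _ hd := absurd hd (by rw [Fin.sum_univ_zero]; exact d.not_lt_zero)
  card_upShadow_hilbSegment_le I _ hI d := by
    rw [upShadow_hilbSegment_eq_empty (by rw [Fin.sum_univ_zero]; exact d.succ_pos),
      Finset.card_empty, zero_add]
    exact hilb_mono hI _

theorem isMacaulayOfType_prefixIdeal [Infinite K]
    (hgrowth : ∀ j, ∑ i with i < j, (a i - 1) < a j) (hb : IsHomog b)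
    (hbX : b ≤ idealOfVars (Fin n) K) (hf : ∀ i, (f i).IsHomogeneous (a i))
    (hreg : ∀ i : Fin r, IsSMulRegular (MvPolynomial (Fin n) K ⧸ prefixIdeal b f i) (f i))
    (hr : hilb (⊤ : Ideal (MvPolynomial (Fin n) K)) 1 ≤ hilb b 1 + r) :
    IsMacaulayOfType (prefixIdeal b f r) a := by
  induction r generalizing b with
  | zero =>
    rw [prefixIdeal_zero, eq_idealOfVars_of_hilb_le hbX hr]
    exact isMacaulayOfType_idealOfVars a
  | succ r ih =>
    have ha (i) : 1 ≤ a i := (Nat.zero_le _).trans_lt (hgrowth i)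
    obtain ⟨l, hl, hlE⟩ := exists_isHomogeneous_one_isSMulRegular
      (fun i : Fin (r + 1) => prefixIdeal b f i)
      fun i => ⟨f i, mem_idealOfVars_of_isHomogeneous (hf i) (ha i), hreg i⟩
    have hlb : IsSMulRegular (MvPolynomial (Fin n) K ⧸ b) l := by
      have h := hlE 0
      rwa [Fin.val_zero, prefixIdeal_zero] at h
    have : Nontrivial (MvPolynomial (Fin n) K ⧸ b) :=
      Ideal.Quotient.nontrivial_iff.2 (ne_top_of_le_idealOfVars hbX)
    have hl0 : l ≠ 0 := fun h => IsSMulRegular.not_zero (h ▸ hlb)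
    have hhilb : hilb (b ⊔ Ideal.span {l}) 1 = hilb b 1 + 1 := by
      have h := hilb_sup_span_add_hilb hb hl hlb 0
      rwa [hilb_top_zero, hilb_zero_eq_zero hbX] at h
    have G := ih (b := b ⊔ Ideal.span {l}) (f := Fin.init f) (sum_init_lt hgrowth)
      (hb.sup_span_singleton hl)
      (sup_le hbX ((Ideal.span_singleton_le_iff_mem _).2
        (mem_idealOfVars_of_isHomogeneous hl one_pos)))
      (fun i => hf i.castSucc) (fun i => ?_) (by omega)
    · rw [prefixIdeal_sup_span, prefixIdeal_init b f le_rfl, ← Fin.removeNth_last] at G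
      have hlast := prefixIdeal_succ b f (Fin.last r)
      rw [Fin.val_last] at hlast
      rw [hlast]
      exact .sup_span (monotone_of_sum_lt hgrowth) ha (sum_removeNth_last_lt hgrowth)
        (isHomog_prefixIdeal hb hf r) hl hl0 (hlE (Fin.last r)) (hf _) (hreg (Fin.last r)) G
    · rw [prefixIdeal_sup_span, prefixIdeal_init b f i.2.le]
      refine isSMulRegular_quotient_sup_span (hreg i.castSucc) ?_
      have := hlE i.succ
      rwa [Fin.val_succ, ← Fin.val_castSucc i, prefixIdeal_succ] at this

end Induction

section LexPlusPowers

theorem isUpperSet_of_add_single_mem {σ : Type*} {T : Set (σ →₀ ℕ)}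
    (hT : ∀ u ∈ T, ∀ i, u + Finsupp.single i 1 ∈ T) : IsUpperSet T := by
  suffices h : ∀ w, ∀ u ∈ T, u + w ∈ T by
    intro u v huv hu
    rw [← add_tsub_cancel_of_le huv]
    exact h _ u hu
  intro w
  induction w using Finsupp.induction_linear with
  | zero => exact fun u hu => by rwa [add_zero]
  | add w w' hw hw' => exact fun u hu => by simpa only [add_assoc] using hw' _ (hw u hu)
  | single i k =>
    induction k with
    | zero => exact fun u hu => by rwa [Finsupp.single_zero, add_zero]
    | succ k ih =>
      intro u hu
      rw [Finsupp.single_add, ← add_assoc]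
      exact hT _ (ih u hu) i

variable {K : Type} [Field K] {n : ℕ} {a : Fin n → ℕ} {b I : Ideal (MvPolynomial (Fin n) K)}
  {d : ℕ}

/-- The exponents of the monomials in the lex-plus-powers ideal attached to `I`: those outside the
box of side lengths `a`, and in degree `d` the first `dim (I / b)_d` exponents inside it. -/
def lexPlusPowersExponents (a : Fin n → ℕ) (b I : Ideal (MvPolynomial (Fin n) K)) :
    Set (Fin n →₀ ℕ) :=
  {u | (∀ i, u i < a i) → ⇑u ∈ hilbSegment a b I (∑ i, u i)}

/-- The lex-plus-powers ideal for the pure powers `X i ^ a i` with the Hilbert function of `I`. -/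
noncomputable def lexPlusPowers (a : Fin n → ℕ) (b I : Ideal (MvPolynomial (Fin n) K)) :
    Ideal (MvPolynomial (Fin n) K) :=
  Ideal.span ((fun u => monomial u 1) '' lexPlusPowersExponents a b I)

theorem IsMacaulayOfType.isUpperSet_lexPlusPowersExponents (G : IsMacaulayOfType b a)
    (hI : IsHomog I) (hbI : b ≤ I) : IsUpperSet (lexPlusPowersExponents a b I) := by
  refine isUpperSet_of_add_single_mem fun u hu i => ?_
  rw [lexPlusPowersExponents, Set.mem_ofPred_eq, Finsupp.coe_add, Finsupp.single_eq_pi_single,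
    sum_add_single]
  refine fun hlt => G.upShadow_hilbSegment_subset hI hbI _
    (add_single_mem_upShadow hilbSegment_subset_level (hu fun j => ?_) ?_)
  · exact (Nat.le_add_right _ _).trans_lt (hlt j)
  · simpa only [Pi.add_apply, Pi.single_eq_same] using hlt i

theorem IsMacaulayOfType.mem_lexPlusPowers_iff (G : IsMacaulayOfType b a) (hI : IsHomog I)
    (hbI : b ≤ I) (x : MvPolynomial (Fin n) K) :
    x ∈ lexPlusPowers a b I ↔ ∀ u ∈ x.support, u ∈ lexPlusPowersExponents a b I := by
  rw [lexPlusPowers, mem_ideal_span_monomial_image]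
  refine forall₂_congr fun u _ => ⟨?_, fun hu => ⟨u, hu, le_rfl⟩⟩
  rintro ⟨v, hv, hvu⟩
  exact G.isUpperSet_lexPlusPowersExponents hI hbI hvu hv

theorem X_pow_mem_lexPlusPowers (i : Fin n) : X i ^ a i ∈ lexPlusPowers a b I := by
  rw [X_pow_eq_monomial]
  refine Ideal.subset_span (Set.mem_image_of_mem _ fun h => absurd (h i) ?_)
  rw [Finsupp.single_eq_same]
  exact lt_irrefl _

theorem ncard_degree_sdiff_lexPlusPowersExponents :
    ({u | u.degree = d} \ lexPlusPowersExponents a b I).ncard =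
      (level a d \ hilbSegment a b I d).card := by
  rw [← Set.ncard_coe_finset]
  refine Set.ncard_congr (fun u _ => ⇑u) (fun u hu => ?_)
    (fun _ _ _ _ h => DFunLike.coe_injective h) fun v hv => ?_
  · obtain ⟨hd, hu⟩ := hu
    obtain ⟨hlt, hu⟩ := Classical.not_imp.1 hu
    rw [Set.mem_ofPred_eq, Finsupp.degree_eq_sum] at hd
    exact Finset.mem_sdiff.2 ⟨mem_level.2 ⟨hlt, hd⟩, hd ▸ hu⟩
  · obtain ⟨hv, hvs⟩ := Finset.mem_sdiff.1 hv
    obtain ⟨hlt, hd⟩ := mem_level.1 hv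
    refine ⟨Finsupp.equivFunOnFinite.symm v, ⟨?_, fun h => hvs (hd ▸ h hlt)⟩, rfl⟩
    rw [Set.mem_ofPred_eq, Finsupp.degree_eq_sum]
    exact hd

theorem IsMacaulayOfType.hilb_lexPlusPowers (G : IsMacaulayOfType b a) (hI : IsHomog I)
    (hbI : b ≤ I) (d : ℕ) : hilb (lexPlusPowers a b I) d = hilb I d := by
  have h₁ := Set.ncard_inter_add_ncard_sdiff_eq_ncard {u : Fin n →₀ ℕ | u.degree = d}
    (lexPlusPowersExponents a b I) ((Finsupp.finite_of_degree_le d).subset fun _ => le_of_eq)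
  rw [ncard_degree_sdiff_lexPlusPowersExponents, ← hilb_top_eq_ncard (K := K), Set.inter_comm,
    ← Set.ofPred_mem_eq (s := lexPlusPowersExponents a b I), ← Set.ofPred_and,
    ← hilb_eq_ncard (G.mem_lexPlusPowers_iff hI hbI)] at h₁
  have h₂ := Finset.card_sdiff_add_card_eq_card (hilbSegment_subset_level (a := a) (b := b)
    (I := I) (d := d))
  have h₃ := G.hilb_add_card_level d
  have h₄ := G.card_hilbSegment_add_hilb hbI d
  omega

end LexPlusPowers

end EGH

/-- the Eisenbud–Green–Harris conjecture `EGH_{a,n}` holds when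
`a_j > Σ_{i<j} (a_i − 1)` for all `j`. -/
theorem stmt11 {K : Type} [Field K] [Infinite K] {n : ℕ} (a : Fin n → ℕ)
    (ha2 : ∀ i, 2 ≤ a i) (hmono : Monotone a)
    (hgrowth : ∀ j : Fin n, ∑ i ∈ Finset.univ.filter (· < j), (a i - 1) < a j) :
    EGHnr K n n le_rfl a := by
  rintro I hI ⟨f, ⟨-, hreg⟩, hf, hfI⟩
  have hprefix (i : Fin n) :
      EGH.prefixIdeal ⊥ f i = Ideal.span (f '' {j : Fin n | j < i}) := bot_sup_eq _
  have hfI' : EGH.prefixIdeal ⊥ f n ≤ I := by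
    rw [EGH.prefixIdeal_self, bot_sup_eq]
    exact Ideal.span_le.2 (Set.range_subset_iff.2 hfI)
  have hf_macaulay : EGH.IsMacaulayOfType (EGH.prefixIdeal ⊥ f n) a := by
    refine EGH.isMacaulayOfType_prefixIdeal hgrowth EGH.isHomog_bot bot_le hf (fun i => ?_) ?_
    · rw [hprefix]
      exact (isSMulRegular_quotient_iff_mem_of_smul_mem _ _).2 (hreg i)
    · exact EGH.hilb_top_one.trans_le (Nat.le_add_left _ _)
  exact ⟨EGH.lexPlusPowers a (EGH.prefixIdeal ⊥ f n) I, EGH.X_pow_mem_lexPlusPowers,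
    fun d => (hf_macaulay.hilb_lexPlusPowers hI hfI' d).symm⟩
end

section
/- The Eisenbud–Green–Harris conjecture holds for n = 2: for any 2 ≤ a_1 ≤ a_2, every homogeneous ideal of k[x,y] containing a homogeneous regular sequence f_1, f_2 of degrees a_1, a_2 has the same Hilbert function as an ideal containing x^{a_1} and y^{a_2}. -/
open MvPolynomial

/-!
Let `𝔪 = (x, y)` and let `W` be a nonzero finite-dimensional subspace of `K[x, y]`. Then
`x (W : 𝔪) + y (W : 𝔪) ⊆ W`, and `x (W : 𝔪) ∩ y (W : 𝔪) ⊆ xy ((W : 𝔪) : 𝔪)`, so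
`dim W - dim (W : 𝔪) ≥ dim (W : 𝔪) - dim ((W : 𝔪) : 𝔪)`. These differences are positive, and by
descent along `W ↦ (W : 𝔪)` a difference equal to `1` forces `W = g S_e`, where `S_e` is the
space of forms of degree `e`.

Apply this to `W = I_{d+1}`, where `I_d ⊆ (I_{d+1} : 𝔪)`. Once `d + 1 ≥ a₂`, such a `g` divides
`f₁` and `f₂`, since it divides their multiples by powers of `x` and of `y`, so it is a unit. Hence
the Hilbert function of `I` grows by at least `2` at each step from degree `a₂ - 1` on, until it
reaches that of `K[x, y]`. This is exactly what is needed for the monomials divisible by `y ^ a₂`,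
completed in each degree by a lex segment to the right number, to span an ideal.
-/

section Divisibility

lemma dvd_of_dvd_mul_of_isRelPrime {R : Type*} [CommRing R] [IsDomain R]
    [UniqueFactorizationMonoid R] {g f u v : R} (huv : IsRelPrime u v) (hu : g ∣ f * u)
    (hv : g ∣ f * v) : g ∣ f := by
  let := UniqueFactorizationMonoid.toGCDMonoid R
  have hgcd : g ∣ f * gcd u v := (dvd_gcd hu hv).trans (gcd_mul_left' f u v).dvd
  exact (IsUnit.dvd_mul_right (gcd_isUnit_iff_isRelPrime.2 huv)).1 hgcd

lemma not_X_dvd_X {σ R : Type*} [CommSemiring R] [Nontrivial R] {i j : σ} (hij : i ≠ j) :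
    ¬(X i : MvPolynomial σ R) ∣ X j := by
  simpa only [X_dvd_X] using hij

lemma isRelPrime_X_pow_X_pow {σ R : Type*} [CommRing R] [IsDomain R]
    [UniqueFactorizationMonoid R] {i j : σ} (hij : i ≠ j) (k l : ℕ) :
    IsRelPrime (X i ^ k : MvPolynomial σ R) (X j ^ l) :=
  (X_prime.irreducible.isRelPrime_iff_not_dvd.2 (not_X_dvd_X hij)).pow

end Divisibility

namespace IsRegSeq

variable {K : Type} [Field K] {n : ℕ}

lemma ne_zero {r : ℕ} {f : Fin r → MvPolynomial (Fin n) K} (hf : IsRegSeq f) (i : Fin r) :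
    f i ≠ 0 := by
  intro hi
  have hone : (1 : MvPolynomial (Fin n) K) ∈ Ideal.span (f '' {j | j < i}) :=
    hf.2 i 1 (by simp only [hi, zero_mul, Submodule.zero_mem])
  exact hf.1 ((Ideal.eq_top_iff_one _).2 (Ideal.span_mono (Set.image_subset_range _ _) hone))

lemma isRelPrime {f : Fin 2 → MvPolynomial (Fin n) K} (hf : IsRegSeq f) :
    IsRelPrime (f 0) (f 1) := by
  rintro g ⟨u, hu⟩ ⟨v, hv⟩
  have himage : f '' {j : Fin 2 | j < 1} = {f 0} := by
    rw [show {j : Fin 2 | j < 1} = {0} by ext j; fin_cases j <;> simp, Set.image_singleton]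
  have hdvd : f 0 ∣ u := by
    have hu_mem := hf.2 1 u
    rw [himage, Ideal.mem_span_singleton, Ideal.mem_span_singleton] at hu_mem
    exact hu_mem ⟨v, by rw [hu, hv]; ring⟩
  have hu0 : u ≠ 0 := by
    rintro rfl
    exact hf.ne_zero 0 (by rw [hu, mul_zero])
  refine isUnit_of_dvd_one ((mul_dvd_mul_iff_right hu0).1 ?_)
  rwa [one_mul, ← hu]

end IsRegSeq

section VarColon

variable {σ K : Type*} [Field K]

lemma finrank_map_mulLeft {g : MvPolynomial σ K} (hg : g ≠ 0)
    (V : Submodule K (MvPolynomial σ K)) :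
    Module.finrank K (V.map (LinearMap.mulLeft K g)) = Module.finrank K V :=
  (Submodule.equivMapOfInjective _ (mul_right_injective₀ hg) V).finrank_eq.symm

/-- The colon space `(W : 𝔪)` of a space of polynomials `W` by the ideal `𝔪` of the variables,
that is, the polynomials all of whose multiples by variables lie in `W`. -/
noncomputable def varColon (W : Submodule K (MvPolynomial σ K)) :
    Submodule K (MvPolynomial σ K) :=
  ⨅ i, W.comap (LinearMap.mulLeft K (X i))

variable {W : Submodule K (MvPolynomial σ K)}

lemma mem_varColon {p : MvPolynomial σ K} : p ∈ varColon W ↔ ∀ i, X i * p ∈ W := by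
  simp only [varColon, Submodule.mem_iInf, Submodule.mem_comap, LinearMap.mulLeft_apply]

lemma map_mulLeft_X_varColon_le (W : Submodule K (MvPolynomial σ K)) (i : σ) :
    (varColon W).map (LinearMap.mulLeft K (X i)) ≤ W :=
  Submodule.map_le_iff_le_comap.2 fun _ hp ↦ mem_varColon.1 hp i

lemma varColon_bot [Nonempty σ] : varColon (⊥ : Submodule K (MvPolynomial σ K)) = ⊥ := by
  refine (Submodule.eq_bot_iff _).2 fun p hp ↦ ?_
  obtain ⟨i⟩ := ‹Nonempty σ›
  exact (mul_eq_zero.1 (mem_varColon.1 hp i)).resolve_left (X_ne_zero i)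

instance finite_varColon [Nonempty σ] [Module.Finite K W] : Module.Finite K (varColon W) := by
  obtain ⟨i⟩ := ‹Nonempty σ›
  have := Submodule.finiteDimensional_of_le (map_mulLeft_X_varColon_le W i)
  exact Module.Finite.equiv
    (Submodule.equivMapOfInjective (LinearMap.mulLeft K (X i))
      (mul_right_injective₀ (X_ne_zero i)) (varColon W)).symm

lemma finrank_varColon_lt [Nontrivial σ] [Module.Finite K W] (hW : W ≠ ⊥) :
    Module.finrank K (varColon W) < Module.finrank K W := by
  obtain ⟨i, j, hij⟩ := exists_pair_ne σ
  by_contra! hle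
  have hmap : (varColon W).map (LinearMap.mulLeft K (X i)) = W :=
    Submodule.eq_of_le_of_finrank_le (map_mulLeft_X_varColon_le W i)
      (by rwa [finrank_map_mulLeft (X_ne_zero i)])
  have hdvd (n : ℕ) : ∀ p ∈ varColon W, X i ^ n ∣ p := by
    induction n with
    | zero => exact fun p _ ↦ (pow_zero (X i : MvPolynomial σ K)) ▸ one_dvd p
    | succ n ih =>
      intro p hp
      have hjp := mem_varColon.1 hp j
      rw [← hmap] at hjp
      obtain ⟨r, hr, hrp⟩ := hjp
      refine X_prime.pow_dvd_of_dvd_mul_left _ (not_X_dvd_X hij) ?_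
      rw [← hrp, LinearMap.mulLeft_apply, pow_succ']
      exact mul_dvd_mul_left _ (ih r hr)
  have hbot : varColon W = ⊥ := by
    refine (Submodule.eq_bot_iff _).2 fun p hp ↦ ?_
    by_contra hp0
    obtain ⟨n, hn⟩ := FiniteMultiplicity.of_not_isUnit (X_prime (i := i)).not_isUnit hp0
    exact hn (hdvd _ p hp)
  exact hW (by rw [← hmap, hbot, Submodule.map_bot])

lemma homogeneousSubmodule_succ_le {d : ℕ} (h : homogeneousSubmodule σ K d ≤ varColon W) :
    homogeneousSubmodule σ K (d + 1) ≤ W := by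
  rw [← homogeneousSubmodule_one_pow, pow_succ', homogeneousSubmodule_one_pow,
    homogeneousSubmodule_one_eq_span_X, Submodule.mul_le]
  intro l hl p hp
  have hspan : Submodule.span K (Set.range X) ≤ W.comap (LinearMap.mulRight K p) := by
    rw [Submodule.span_le]
    rintro _ ⟨i, rfl⟩
    exact mem_varColon.1 (h hp) i
  exact hspan hl

lemma map_mulLeft_homogeneousSubmodule_succ_le {g : MvPolynomial σ K} {d : ℕ}
    (h : (homogeneousSubmodule σ K d).map (LinearMap.mulLeft K g) ≤ varColon W) :
    (homogeneousSubmodule σ K (d + 1)).map (LinearMap.mulLeft K g) ≤ W := by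
  rw [Submodule.map_le_iff_le_comap] at h ⊢
  refine homogeneousSubmodule_succ_le fun p hp ↦ mem_varColon.2 fun i ↦ ?_
  have hip : X i * (g * p) ∈ W := mem_varColon.1 (h hp) i
  rwa [mul_left_comm] at hip

lemma exists_eq_map_mulLeft_of_finrank_eq_one (h : Module.finrank K W = 1) :
    ∃ g, W = (homogeneousSubmodule σ K 0).map (LinearMap.mulLeft K g) := by
  obtain ⟨⟨g, hg⟩, -, hspan⟩ := finrank_eq_one_iff'.1 h
  refine ⟨g, ?_⟩
  rw [homogeneousSubmodule_zero, Submodule.one_eq_span, Submodule.map_span, Set.image_singleton,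
    LinearMap.mulLeft_apply, mul_one]
  refine le_antisymm (fun p hp ↦ ?_) ((Submodule.span_singleton_le_iff_mem _ _).2 hg)
  obtain ⟨c, hc⟩ := hspan ⟨p, hp⟩
  exact Submodule.mem_span_singleton.2 ⟨c, congrArg Subtype.val hc⟩

end VarColon

section MonomialCount

lemma finrank_restrictSupport {σ K : Type*} [Field K] (s : Set (σ →₀ ℕ)) :
    Module.finrank K (restrictSupport K s) = s.ncard :=
  Module.finrank_eq_nat_card_basis (basisRestrictSupport K s)

lemma restrictSupport_inter {σ R : Type*} [CommSemiring R] (s t : Set (σ →₀ ℕ)) :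
    restrictSupport R (s ∩ t) = restrictSupport R s ⊓ restrictSupport R t := by
  ext p
  simp only [Submodule.mem_inf, mem_restrictSupport_iff, Set.subset_inter_iff]

lemma homogeneousSubmodule_eq_restrictSupport {σ R : Type*} [CommSemiring R] (d : ℕ) :
    homogeneousSubmodule σ R d = restrictSupport R {m | m.degree = d} :=
  homogeneousSubmodule_eq_finsupp_supported σ R d

lemma degree_eq_add_of_ne {i j : Fin 2} (hij : i ≠ j) (m : Fin 2 →₀ ℕ) :
    m.degree = m i + m j := by
  rw [Finsupp.degree_eq_sum, Fin.sum_univ_two]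
  fin_cases i <;> fin_cases j <;> first | exact absurd rfl hij | rfl | exact add_comm _ _

lemma ncard_degree_eq_and (d : ℕ) (j : Fin 2) (P : ℕ → Prop) [DecidablePred P] :
    {m : Fin 2 →₀ ℕ | m.degree = d ∧ P (m j)}.ncard = ((Finset.range (d + 1)).filter P).card := by
  obtain ⟨i, hij⟩ := exists_ne j
  have hinj : Set.InjOn (fun m : Fin 2 →₀ ℕ ↦ m j) {m | m.degree = d ∧ P (m j)} := by
    rintro m ⟨hm, -⟩ m' ⟨hm', -⟩ (h : m j = m' j)
    rw [degree_eq_add_of_ne hij] at hm hm'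
    ext k
    obtain rfl | rfl : k = i ∨ k = j := by omega
    · omega
    · exact h
  have himage : (fun m : Fin 2 →₀ ℕ ↦ m j) '' {m | m.degree = d ∧ P (m j)} =
      ((Finset.range (d + 1)).filter P : Finset ℕ) := by
    ext k
    simp only [Set.mem_image, Set.mem_ofPred_eq, Finset.coe_filter, Finset.mem_range]
    constructor
    · rintro ⟨m, ⟨hm, hP⟩, rfl⟩
      rw [degree_eq_add_of_ne hij] at hm
      exact ⟨by omega, hP⟩
    · rintro ⟨hk, hP⟩
      have hj : (Finsupp.single i (d - k) + Finsupp.single j k) j = k := by simp [hij]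
      refine ⟨Finsupp.single i (d - k) + Finsupp.single j k, ⟨?_, by rwa [hj]⟩, hj⟩
      rw [map_add, Finsupp.degree_single, Finsupp.degree_single]
      omega
  rw [← hinj.ncard_image, himage, Set.ncard_coe_finset]

lemma finrank_homogeneousSubmodule_fin_two {K : Type*} [Field K] (d : ℕ) :
    Module.finrank K (homogeneousSubmodule (Fin 2) K d) = d + 1 := by
  rw [homogeneousSubmodule_eq_restrictSupport, finrank_restrictSupport]
  simpa using ncard_degree_eq_and d 0 fun _ ↦ True

end MonomialCount

section Plane

variable {K : Type*} [Field K] {W : Submodule K (MvPolynomial (Fin 2) K)}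

lemma map_X_zero_inf_map_X_one_le_map_varColon :
    (varColon W).map (LinearMap.mulLeft K (X 0)) ⊓ (varColon W).map (LinearMap.mulLeft K (X 1)) ≤
      (varColon (varColon W)).map (LinearMap.mulLeft K (X 0 * X 1)) := by
  rintro _ ⟨⟨u, hu, rfl⟩, ⟨v, hv, huv⟩⟩
  simp only [LinearMap.mulLeft_apply] at huv
  obtain ⟨p, rfl⟩ : (X 0 : MvPolynomial (Fin 2) K) ∣ v :=
    (X_prime.dvd_or_dvd ⟨u, huv⟩).resolve_left (not_X_dvd_X zero_ne_one)
  obtain rfl : u = X 1 * p :=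
    mul_left_cancel₀ (X_ne_zero (0 : Fin 2)) (by rw [← huv, mul_left_comm])
  exact ⟨p, mem_varColon.2 (Fin.forall_fin_two.2 ⟨hv, hu⟩),
    by simp only [LinearMap.mulLeft_apply, mul_assoc]⟩

lemma two_mul_finrank_varColon_le [Module.Finite K W] :
    2 * Module.finrank K (varColon W) ≤
      Module.finrank K W + Module.finrank K (varColon (varColon W)) := by
  have hsum := Submodule.finrank_sup_add_finrank_inf_eq
    ((varColon W).map (LinearMap.mulLeft K (X 0))) ((varColon W).map (LinearMap.mulLeft K (X 1)))
  have hsup := Submodule.finrank_mono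
    (sup_le (map_mulLeft_X_varColon_le W 0) (map_mulLeft_X_varColon_le W 1))
  have hinf := Submodule.finrank_mono (map_X_zero_inf_map_X_one_le_map_varColon (W := W))
  rw [finrank_map_mulLeft (X_ne_zero _), finrank_map_mulLeft (X_ne_zero _)] at hsum
  rw [finrank_map_mulLeft (mul_ne_zero (X_ne_zero _) (X_ne_zero _))] at hinf
  omega

theorem exists_eq_map_mulLeft_of_finrank_le [Module.Finite K W] (hW : W ≠ ⊥)
    (h : Module.finrank K W ≤ Module.finrank K (varColon W) + 1) :
    ∃ g e, W = (homogeneousSubmodule (Fin 2) K e).map (LinearMap.mulLeft K g) := by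
  induction hn : Module.finrank K W using Nat.strong_induction_on generalizing W with
  | _ n ih =>
    have hlt := finrank_varColon_lt hW
    by_cases hbot : varColon W = ⊥
    · rw [hbot, finrank_bot] at h hlt
      obtain ⟨g, hg⟩ := exists_eq_map_mulLeft_of_finrank_eq_one (W := W) (by omega)
      exact ⟨g, 0, hg⟩
    have hconvex := two_mul_finrank_varColon_le (W := W)
    obtain ⟨g, e, hg⟩ := ih _ (hn ▸ hlt) hbot (by omega) rfl
    have hg0 : g ≠ 0 := by
      rintro rfl
      exact hbot (by rw [hg, LinearMap.mulLeft_zero_eq_zero, Submodule.map_zero])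
    refine ⟨g, e + 1, (Submodule.eq_of_le_of_finrank_le
      (map_mulLeft_homogeneousSubmodule_succ_le hg.ge) ?_).symm⟩
    rw [hg] at h
    simp only [finrank_map_mulLeft hg0, finrank_homogeneousSubmodule_fin_two] at h ⊢
    exact h

end Plane

/-- The growth conditions satisfied by the Hilbert functions of the ideals of `K[x, y]` containing
two coprime forms of degrees `a ≤ b` (a complete intersection of type `(a, b)`). The alternative
`h (d + 1) = d + 2` says that the ideal contains all forms of degree `d + 1`. -/
structure HasCIGrowth (a b : ℕ) (h : ℕ → ℕ) : Prop where
  le : a ≤ b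
  pos : 0 < h a
  le_succ (d : ℕ) : h d ≤ d + 1
  lt_succ (d : ℕ) : 0 < h d → h d < h (d + 1)
  add_two_le_or_eq (d : ℕ) : b ≤ d + 1 → h d + 2 ≤ h (d + 1) ∨ h (d + 1) = d + 2

section HilbertFunction

variable {K : Type} [Field K] {n : ℕ}

/-- The degree-`d` piece `I_d` of an ideal `I`, whose dimension is `hilb I d`. -/
noncomputable def gradedPiece (I : Ideal (MvPolynomial (Fin n) K)) (d : ℕ) :
    Submodule K (MvPolynomial (Fin n) K) :=
  I.restrictScalars K ⊓ homogeneousSubmodule (Fin n) K d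

lemma finrank_gradedPiece (I : Ideal (MvPolynomial (Fin n) K)) (d : ℕ) :
    Module.finrank K (gradedPiece I d) = hilb I d :=
  rfl

instance finite_homogeneousSubmodule {σ R : Type*} [Finite σ] [CommSemiring R] (d : ℕ) :
    Module.Finite R (homogeneousSubmodule σ R d) :=
  Module.Finite.iff_fg.2 (homogeneousSubmodule_fg _ _ d)

instance finite_gradedPiece (I : Ideal (MvPolynomial (Fin n) K)) (d : ℕ) :
    Module.Finite K (gradedPiece I d) :=
  Submodule.finiteDimensional_of_le inf_le_right

lemma gradedPiece_le_varColon (I : Ideal (MvPolynomial (Fin n) K)) (d : ℕ) :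
    gradedPiece I d ≤ varColon (gradedPiece I (d + 1)) :=
  fun _ hp ↦ mem_varColon.2 fun i ↦
    ⟨I.mul_mem_left _ hp.1, add_comm 1 d ▸ (isHomogeneous_X K i).mul hp.2⟩

lemma mul_X_pow_mem_gradedPiece {I : Ideal (MvPolynomial (Fin n) K)} {f : MvPolynomial (Fin n) K}
    {a d : ℕ} (hf : f.IsHomogeneous a) (hfI : f ∈ I) (had : a ≤ d) (i : Fin n) :
    f * X i ^ (d - a) ∈ gradedPiece I d := by
  refine ⟨I.mul_mem_right _ hfI, ?_⟩
  have hmul := hf.mul (isHomogeneous_X_pow (R := K) i (d - a))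
  rwa [Nat.add_sub_cancel' had] at hmul

lemma hilb_restrictSupportIdeal (s : Set (Fin n →₀ ℕ)) (hs : IsUpperSet s) (d : ℕ) :
    hilb (restrictSupportIdeal K s hs) d = {m | m.degree = d ∧ m ∈ s}.ncard := by
  rw [← finrank_restrictSupport (K := K), ← finrank_gradedPiece, gradedPiece,
    restrictScalars_restrictSupportIdeal, homogeneousSubmodule_eq_restrictSupport, inf_comm,
    ← restrictSupport_inter]
  rfl

variable {I : Ideal (MvPolynomial (Fin 2) K)}

lemma hilb_le_succ (I : Ideal (MvPolynomial (Fin 2) K)) (d : ℕ) : hilb I d ≤ d + 1 :=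
  (Submodule.finrank_mono inf_le_right).trans_eq (finrank_homogeneousSubmodule_fin_two d)

lemma hilb_lt_hilb_succ {d : ℕ} (h : 0 < hilb I d) : hilb I d < hilb I (d + 1) := by
  have hle := gradedPiece_le_varColon I d
  have hbot : gradedPiece I (d + 1) ≠ ⊥ := by
    intro hbot
    rw [hbot, varColon_bot, le_bot_iff] at hle
    rw [← finrank_gradedPiece, hle, finrank_bot] at h
    exact h.false
  exact (Submodule.finrank_mono hle).trans_lt (finrank_varColon_lt hbot)

variable {f₁ f₂ : MvPolynomial (Fin 2) K} {a b d : ℕ}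

lemma isUnit_of_forall_dvd_gradedPiece {g : MvPolynomial (Fin 2) K} (hf : IsRelPrime f₁ f₂)
    (hf₁ : f₁.IsHomogeneous a) (hf₂ : f₂.IsHomogeneous b) (hI₁ : f₁ ∈ I) (hI₂ : f₂ ∈ I)
    (ha : a ≤ d) (hb : b ≤ d) (hg : ∀ p ∈ gradedPiece I d, g ∣ p) : IsUnit g := by
  have hdvd {f : MvPolynomial (Fin 2) K} {c : ℕ} (hfc : f.IsHomogeneous c) (hfI : f ∈ I)
      (hc : c ≤ d) : g ∣ f :=
    dvd_of_dvd_mul_of_isRelPrime (isRelPrime_X_pow_X_pow zero_ne_one _ _)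
      (hg _ (mul_X_pow_mem_gradedPiece hfc hfI hc 0))
      (hg _ (mul_X_pow_mem_gradedPiece hfc hfI hc 1))
  exact hf (hdvd hf₁ hI₁ ha) (hdvd hf₂ hI₂ hb)

lemma hilb_add_two_le_or_eq (hf : IsRelPrime f₁ f₂) (hf₁0 : f₁ ≠ 0) (hf₁ : f₁.IsHomogeneous a)
    (hf₂ : f₂.IsHomogeneous b) (hI₁ : f₁ ∈ I) (hI₂ : f₂ ∈ I) (ha : a ≤ d + 1) (hb : b ≤ d + 1) :
    hilb I d + 2 ≤ hilb I (d + 1) ∨ hilb I (d + 1) = d + 2 := by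
  refine or_iff_not_imp_left.2 fun hlt ↦ ?_
  have hp := mul_X_pow_mem_gradedPiece hf₁ hI₁ ha 0
  have hp0 : f₁ * X 0 ^ (d + 1 - a) ≠ 0 := mul_ne_zero hf₁0 (pow_ne_zero _ (X_ne_zero _))
  have hbot : gradedPiece I (d + 1) ≠ ⊥ := (Submodule.ne_bot_iff _).2 ⟨_, hp, hp0⟩
  have hcolon := Submodule.finrank_mono (gradedPiece_le_varColon I d)
  obtain ⟨g, e, hge⟩ := exists_eq_map_mulLeft_of_finrank_le hbot
    (by rw [finrank_gradedPiece] at hcolon ⊢; omega)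
  have hunit : IsUnit g := by
    refine isUnit_of_forall_dvd_gradedPiece hf hf₁ hf₂ hI₁ hI₂ ha hb fun p hp ↦ ?_
    rw [hge] at hp
    obtain ⟨q, -, rfl⟩ := hp
    exact dvd_mul_right g q
  have hdeg : e = d + 1 := by
    obtain ⟨c, -, hc⟩ := isUnit_iff_eq_C_of_isReduced.1 hunit
    have hp' := hp
    rw [hge] at hp'
    obtain ⟨q, hq, hqp⟩ := hp'
    have hpe := (isHomogeneous_C (Fin 2) c).mul hq
    rw [← hc, zero_add, ← LinearMap.mulLeft_apply (R := K), hqp] at hpe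
    exact hpe.inj_right hp.2 hp0
  rw [← finrank_gradedPiece, hge, finrank_map_mulLeft hunit.ne_zero,
    finrank_homogeneousSubmodule_fin_two, hdeg]

theorem hasCIGrowth_hilb (hf : IsRelPrime f₁ f₂) (hf₁0 : f₁ ≠ 0) (hf₁ : f₁.IsHomogeneous a)
    (hf₂ : f₂.IsHomogeneous b) (hI₁ : f₁ ∈ I) (hI₂ : f₂ ∈ I) (hab : a ≤ b) :
    HasCIGrowth a b (hilb I) where
  le := hab
  pos := by
    refine Nat.pos_of_ne_zero fun h ↦ hf₁0 ?_
    have hmem : f₁ ∈ gradedPiece I a := ⟨hI₁, hf₁⟩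
    have hbot : gradedPiece I a = ⊥ := Submodule.finrank_eq_zero.1 h
    rwa [hbot] at hmem
  le_succ := hilb_le_succ I
  lt_succ _ := hilb_lt_hilb_succ
  add_two_le_or_eq _ hb := hilb_add_two_le_or_eq hf hf₁0 hf₁ hf₂ hI₁ hI₂ (hab.trans hb) hb

end HilbertFunction

/-- The exponents of the lex-plus-powers ideal of `K[x, y]` with Hilbert function `h`, where `y` is
the variable of index `j`. In degree `d` there are `d + 1 - b` monomials divisible by `y ^ b`; they
are completed to `h d` monomials by those of smallest degree in `y`. -/
def lexPlusPowers (j : Fin 2) (b : ℕ) (h : ℕ → ℕ) : Set (Fin 2 →₀ ℕ) :=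
  {m | b ≤ m j ∨ (m.degree + 1 - b) + m j < h m.degree}

lemma isUpperSet_of_add_single_mem {σ : Type*} {s : Set (σ →₀ ℕ)}
    (hs : ∀ m ∈ s, ∀ i, m + Finsupp.single i 1 ∈ s) : IsUpperSet s := by
  have hadd (k : σ →₀ ℕ) : ∀ m ∈ s, m + k ∈ s := by
    induction k using Finsupp.induction_linear with
    | zero => exact fun m hm ↦ (add_zero m).symm ▸ hm
    | add k l hk hl => exact fun m hm ↦ add_assoc m k l ▸ hl _ (hk m hm)
    | single i c =>
      intro m hm
      induction c with
      | zero => rwa [Finsupp.single_zero, add_zero]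
      | succ c ih => rw [Finsupp.single_add, ← add_assoc]; exact hs _ ih i
  exact fun m m' hle hm ↦ add_tsub_cancel_of_le hle ▸ hadd _ m hm

namespace HasCIGrowth

variable {a b : ℕ} {h : ℕ → ℕ}

lemma isUpperSet_lexPlusPowers (hh : HasCIGrowth a b h) (j : Fin 2) :
    IsUpperSet (lexPlusPowers j b h) := by
  refine isUpperSet_of_add_single_mem fun m hm i ↦ ?_
  have hlt := hh.lt_succ m.degree
  have htwo := hh.add_two_le_or_eq m.degree
  simp only [lexPlusPowers, Set.mem_ofPred_eq, map_add, Finsupp.degree_single, Finsupp.add_apply]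
    at hm ⊢
  obtain rfl | hij := eq_or_ne i j
  · rw [Finsupp.single_eq_same]
    omega
  · rw [Finsupp.single_eq_of_ne hij.symm]
    omega

lemma succ_sub_le (hh : HasCIGrowth a b h) (d : ℕ) : d + 1 - b ≤ h d := by
  induction d with
  | zero =>
    have hle := hh.le
    have hpos := hh.pos
    obtain rfl | hb := Nat.eq_zero_or_pos b
    · rwa [Nat.le_zero.1 hle] at hpos
    · omega
  | succ d ih =>
    have htwo := hh.add_two_le_or_eq d
    omega

lemma ncard_lexPlusPowers (hh : HasCIGrowth a b h) (j : Fin 2) (d : ℕ) :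
    {m | m.degree = d ∧ m ∈ lexPlusPowers j b h}.ncard = h d := by
  have hfilter : (Finset.range (d + 1)).filter (fun k ↦ b ≤ k ∨ (d + 1 - b) + k < h d) =
      Finset.Ico b (d + 1) ∪ Finset.range (h d - (d + 1 - b)) := by
    have hle := hh.le_succ d
    ext k
    simp only [Finset.mem_filter, Finset.mem_range, Finset.mem_union, Finset.mem_Ico]
    omega
  have hdisj : Disjoint (Finset.Ico b (d + 1)) (Finset.range (h d - (d + 1 - b))) := by
    have hle := hh.le_succ d
    rw [Finset.disjoint_left]
    intro k
    simp only [Finset.mem_Ico, Finset.mem_range]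
    omega
  calc {m | m.degree = d ∧ m ∈ lexPlusPowers j b h}.ncard
      = {m : Fin 2 →₀ ℕ | m.degree = d ∧ (b ≤ m j ∨ (d + 1 - b) + m j < h d)}.ncard := by
        congr 1
        ext m
        exact and_congr_right fun hm ↦ by rw [lexPlusPowers, Set.mem_ofPred_eq, hm]
    _ = (d + 1 - b) + (h d - (d + 1 - b)) := by
        rw [ncard_degree_eq_and d j fun k ↦ b ≤ k ∨ (d + 1 - b) + k < h d, hfilter,
          Finset.card_union_of_disjoint hdisj, Nat.card_Ico, Finset.card_range]
    _ = h d := Nat.add_sub_cancel' (hh.succ_sub_le d)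

theorem exists_ideal_hilb_eq (K : Type) [Field K] (hh : HasCIGrowth a b h)
    {i j : Fin 2} (hij : i ≠ j) :
    ∃ J : Ideal (MvPolynomial (Fin 2) K), X i ^ a ∈ J ∧ X j ^ b ∈ J ∧ ∀ d, hilb J d = h d := by
  have hmem {k : Fin 2} {c : ℕ} (hk : Finsupp.single k c ∈ lexPlusPowers j b h) :
      (X k ^ c : MvPolynomial (Fin 2) K) ∈
        restrictSupportIdeal K _ (hh.isUpperSet_lexPlusPowers j) := by
    rw [← Submodule.restrictScalars_mem K, restrictScalars_restrictSupportIdeal,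
      X_pow_eq_monomial, monomial_mem_restrictSupport]
    exact Or.inl hk
  refine ⟨restrictSupportIdeal K _ (hh.isUpperSet_lexPlusPowers j), hmem ?_, hmem ?_, fun d ↦ ?_⟩
  · have hle := hh.le
    have hpos := hh.pos
    have htwo := hh.add_two_le_or_eq (a - 1)
    simp only [lexPlusPowers, Set.mem_ofPred_eq, Finsupp.degree_single,
      Finsupp.single_eq_of_ne hij.symm]
    obtain rfl | ha := Nat.eq_zero_or_pos a
    · omega
    · rw [Nat.sub_add_cancel ha] at htwo
      omega
  · exact Or.inl Finsupp.single_eq_same.ge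
  · rw [hilb_restrictSupportIdeal, hh.ncard_lexPlusPowers]

end HasCIGrowth

theorem stmt12_general {K : Type} [Field K] (a : Fin 2 → ℕ) : EGHnr K 2 2 le_rfl a := by
  rintro I - ⟨f, hf, hhom, hI⟩
  rcases le_total (a 0) (a 1) with hle | hle
  · have hgrowth :=
      hasCIGrowth_hilb hf.isRelPrime (hf.ne_zero 0) (hhom 0) (hhom 1) (hI 0) (hI 1) hle
    obtain ⟨J, hJ₀, hJ₁, hJ⟩ := hgrowth.exists_ideal_hilb_eq K zero_ne_one
    exact ⟨J, Fin.forall_fin_two.2 ⟨hJ₀, hJ₁⟩, fun d ↦ (hJ d).symm⟩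
  · have hgrowth :=
      hasCIGrowth_hilb hf.isRelPrime.symm (hf.ne_zero 1) (hhom 1) (hhom 0) (hI 1) (hI 0) hle
    obtain ⟨J, hJ₁, hJ₀, hJ⟩ := hgrowth.exists_ideal_hilb_eq K one_ne_zero
    exact ⟨J, Fin.forall_fin_two.2 ⟨hJ₀, hJ₁⟩, fun d ↦ (hJ d).symm⟩

/-- the Eisenbud–Green–Harris conjecture holds for `n = 2`. -/
theorem stmt12 {K : Type} [Field K] [Infinite K] (a : Fin 2 → ℕ)
    (ha2 : ∀ i, 2 ≤ a i) (hmono : Monotone a) :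
    EGHnr K 2 2 le_rfl a :=
  stmt12_general a
end
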